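/- Every finite vertex algebra is solvable: if $V$ is a vertex algebra finitely generated as a $\mathbb{C}[T]$-module, then the underlying Lie conformal algebra $V^{\mathrm{conf}}$ (with $[a_\lambda b] = \sum_{n\geq 0}\frac{\lambda^n}{n!}a_{(n)}b$) satisfies $R^{(N)} = 0$ for some $N$, where $R^{(0)} = V$ and $R^{(n+1)} = [R^{(n)}, R^{(n)}]$. -/

import Mathlib

open scoped BigOperators

/-- A vertex algebra structure on a complex vector space `V`.
`P n a b` denotes the `n`-th product `a_{(n)} b`, `vac` is the vacuum `𝟙`,
and `D` is the infinitesimal translation operator `T`. -/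
structure VertexAlgebra (V : Type*) [AddCommGroup V] [Module ℂ V] where
  P : ℤ → V →ₗ[ℂ] V →ₗ[ℂ] V
  vac : V
  D : V →ₗ[ℂ] V
  field_ax : ∀ a b : V, ∃ N : ℕ, ∀ n : ℕ, N ≤ n → P n a b = 0
  vac_field : ∀ (n : ℤ) (a : V), P n vac a = if n = -1 then a else 0
  creation : ∀ a : V, P (-1) a vac = a
  creation_pos : ∀ (a : V) (n : ℤ), 0 ≤ n → P n a vac = 0
  D_vac : D vac = 0
  transl_inv : ∀ (n : ℤ) (a b : V), P n (D a) b = (-n : ℂ) • P (n - 1) a b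
  D_deriv : ∀ (n : ℤ) (a b : V), D (P n a b) = P n (D a) b + P n a (D b)
  skew : ∀ (n : ℤ) (a b : V),
    P n a b = ∑ᶠ j : ℕ, (((-1 : ℂ) ^ (n + j + 1)) / (j.factorial : ℂ)) • (D ^ j) (P (n + j) b a)
  borcherds : ∀ (m k : ℤ) (a b c : V),
    P m a (P k b c) - P k b (P m a c)
      = ∑ᶠ j : ℕ, ((Ring.choose m j : ℤ) : ℂ) • P (m + k - j) (P j a b) c

namespace VertexAlgebra

variable {V : Type*} [AddCommGroup V] [Module ℂ V] (W : VertexAlgebra V)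

/-- An ideal of a vertex algebra: a `ℂ[T]`-submodule closed under all products with
arbitrary elements of `V`. -/
def IsIdeal (I : Submodule ℂ V) : Prop :=
  (∀ x ∈ I, W.D x ∈ I) ∧ ∀ (a : V), ∀ b ∈ I, ∀ n : ℤ, W.P n a b ∈ I

/-- `A · B`: the span of all products `a_{(j)} b`, `a ∈ A`, `b ∈ B`, `j ∈ ℤ`. -/
def prodSpan (A B : Submodule ℂ V) : Submodule ℂ V :=
  Submodule.span ℂ {x | ∃ a ∈ A, ∃ b ∈ B, ∃ j : ℤ, x = W.P j a b}

/-- `[A, B]`: the span of all products `a_{(j)} b`, `a ∈ A`, `b ∈ B`, `j ≥ 0`. -/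
def posSpan (A B : Submodule ℂ V) : Submodule ℂ V :=
  Submodule.span ℂ {x | ∃ a ∈ A, ∃ b ∈ B, ∃ j : ℕ, x = W.P j a b}

/-- The sequence `I^1 = I`, `I^{n+1} = I^n · I^n` (indexed so that `nilSeq I n = I^{n+1}`). -/
def nilSeq (I : Submodule ℂ V) : ℕ → Submodule ℂ V
  | 0 => I
  | n + 1 => W.prodSpan (nilSeq I n) (nilSeq I n)

/-- A nil-ideal: an ideal whose sequence of iterated self-products vanishes. -/
def IsNilIdeal (I : Submodule ℂ V) : Prop :=
  W.IsIdeal I ∧ ∃ n : ℕ, W.nilSeq I n = ⊥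

/-- A vertex algebra is finite if it is a finitely generated `ℂ[T]`-module. -/
def IsFinite : Prop :=
  ∃ s : Finset V, ∀ v : V,
    v ∈ Submodule.span ℂ {x | ∃ g ∈ s, ∃ k : ℕ, x = (W.D ^ k) g}

/-- Abelian ideal. -/
def IsAbelianIdeal (I : Submodule ℂ V) : Prop :=
  W.IsIdeal I ∧ ∀ a ∈ I, ∀ b ∈ I, ∀ n : ℤ, W.P n a b = 0

end VertexAlgebra

namespace VertexAlgebra

variable {V : Type*} [AddCommGroup V] [Module ℂ V]

/-- The derived series of the Lie conformal algebra underlying a vertex algebra. -/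
def derSeries (W : VertexAlgebra V) : ℕ → Submodule ℂ V
  | 0 => ⊤
  | n + 1 => W.posSpan (derSeries W n) (derSeries W n)

end VertexAlgebra

/-!
By noetherian induction it suffices to show that the nonnegative products of a finite prime vertex
algebra vanish, and a prime vertex algebra is a domain because annihilators are ideals.

In a finite domain a derivation commuting with `T` has no nonzero eigenvalue and no nontrivial
nilpotent part: products of eigenvectors, or of vectors killed by powers of the derivation, would
contradict finiteness over `ℂ[T]`. Suppose some nonnegative product is nonzero. The leading
nonnegative modes are such derivations and form finite-dimensional spaces stable under commutation
with derivations. This forces every derivation to be a multiple of `T`, so that `V` modulo the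
vacuum is free of rank one over `ℂ[T]`. The Jacobi identity then gives `[g_λ g] = A (T + 2λ) g`
modulo the vacuum with `A ≠ 0`, that is, `V` contains a conformal vector `L` whose `T`-powers span
`V` modulo the vacuum. For weight reasons `L₍₋₁₎ L` and `L₍₋₃₎ L` are multiples of `T² L` and
`T⁴ L`, and the Virasoro relations impose inconsistent linear equations on the two coefficients
and the central charge.
-/

open Finset Polynomial

attribute [local instance] LieRing.ofAssociativeRing

/-! ### Finite sums -/

theorem finsum_eq_sum_range {M : Type*} [AddCommMonoid M] {f : ℕ → M} {N : ℕ}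
    (hf : ∀ j, N ≤ j → f j = 0) : ∑ᶠ j, f j = ∑ j ∈ range N, f j := by
  refine finsum_eq_sum_of_support_subset f fun j hj ↦ ?_
  by_contra hN
  exact hj (hf j (by simpa using hN))

theorem eq_zero_of_sum_choose_smul_eq_zero {M : Type*} [AddCommGroup M] {N : ℕ} {h : ℕ → M}
    {m₀ : ℤ} (H : ∀ m ≤ m₀, ∑ j ∈ range N, (Ring.choose m j : ℤ) • h j = 0) :
    ∀ j < N, h j = 0 := by
  induction N generalizing h m₀ with
  | zero => simp
  | succ N ih =>
    -- Pascal's rule: consecutive relations differ by a relation among the shifted `h`.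
    have shifted : ∀ j < N, h (j + 1) = 0 := by
      refine ih (h := fun j ↦ h (j + 1)) (m₀ := m₀ - 1) fun m hm ↦ ?_
      have relation_m := H m (by lia)
      have relation_succ := H (m + 1) (by lia)
      simp only [sum_range_succ', Ring.choose_zero_right, Ring.choose_succ_succ, add_smul,
        sum_add_distrib] at relation_m relation_succ
      rwa [add_assoc, relation_m, add_zero] at relation_succ
    have first : h 0 = 0 := by
      have relation := H m₀ le_rfl
      rwa [sum_range_succ', sum_eq_zero fun j hj ↦ by rw [shifted j (mem_range.1 hj), smul_zero],
        zero_add, Ring.choose_zero_right, one_smul] at relation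
    rintro (_ | j) hj
    · exact first
    · exact shifted j (by lia)

namespace VertexAlgebra

/-! ### Domains and prime vertex algebras -/

section Annihilator

variable {V : Type*} [AddCommGroup V] [Module ℂ V] (W : VertexAlgebra V)

theorem commutator_eq_sum_range (m k : ℤ) {a b : V} (c : V) {N : ℕ}
    (h : ∀ j : ℕ, N ≤ j → W.P j a b = 0) :
    W.P m a (W.P k b c) - W.P k b (W.P m a c)
      = ∑ j ∈ range N, (Ring.choose m j : ℤ) • W.P (m + k - j) (W.P j a b) c := by
  simp only [W.borcherds, Int.cast_smul_eq_zsmul]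
  exact finsum_eq_sum_range fun j hj ↦ by simp [h j hj]

theorem commutator_eq_sum_antidiagonal (m : ℕ) (k : ℤ) (a b c : V) :
    W.P m a (W.P k b c) - W.P k b (W.P m a c)
      = ∑ p ∈ antidiagonal m, m.choose p.1 • W.P (p.2 + k) (W.P p.1 a b) c := by
  have choose_eq_zero : ∀ j : ℕ, m + 1 ≤ j →
      ((Ring.choose (m : ℤ) j : ℤ) : ℂ) • W.P (m + k - j) (W.P j a b) c = 0 := fun j hj ↦ by
    rw [Ring.choose_natCast, Nat.choose_eq_zero_of_lt hj]
    simp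
  rw [W.borcherds, finsum_eq_sum_range choose_eq_zero,
    Nat.sum_antidiagonal_eq_sum_range_succ fun i j ↦ m.choose i • W.P (j + k) (W.P i a b) c]
  refine sum_congr rfl fun j hj ↦ ?_
  rw [Ring.choose_natCast, Int.cast_natCast, Nat.cast_smul_eq_nsmul,
    Nat.cast_sub (Nat.lt_succ_iff.1 (mem_range.1 hj)), sub_add_eq_add_sub]

theorem exists_forall_P_add_eq_zero (n : ℤ) (a b : V) :
    ∃ N : ℕ, ∀ j : ℕ, N ≤ j → W.P (n + j) a b = 0 := by
  obtain ⟨N, hN⟩ := W.field_ax a b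
  refine ⟨N + n.natAbs, fun j hj ↦ ?_⟩
  simpa only [Int.toNat_of_nonneg (show 0 ≤ n + j by lia)] using hN (n + j).toNat (by lia)

variable {W}

theorem skew_eq_sum_range {n : ℤ} {a b : V} {N : ℕ}
    (h : ∀ j : ℕ, N ≤ j → W.P (n + j) b a = 0) :
    W.P n a b = ∑ j ∈ range N,
      (((-1 : ℂ) ^ (n + j + 1)) / (j.factorial : ℂ)) • (W.D ^ j) (W.P (n + j) b a) := by
  rw [W.skew]
  exact finsum_eq_sum_range fun j hj ↦ by simp [h j hj]

theorem P_swap_eq_zero {a b : V} (h : ∀ n : ℤ, W.P n a b = 0) (n : ℤ) : W.P n b a = 0 := by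
  simpa using skew_eq_sum_range (N := 0) fun j _ ↦ h (n + j)

/-- For fixed `m + n`, the commutator formula turns `m ↦ x_{(m)} (v_{(n)} y)` into a combination of
binomial coefficients in `m` that vanishes for `m ≪ 0`, so all its coefficients vanish. -/
theorem P_P_eq_zero_of_annihilates {x y : V} (h : ∀ n : ℤ, W.P n x y = 0) (v : V) (m n : ℤ) :
    W.P m x (W.P n v y) = 0 := by
  obtain ⟨N, hN⟩ := W.field_ax x v
  have mode_eq_sum (m' : ℤ) : W.P m' x (W.P (m + n - m') v y) =
      ∑ j ∈ range N, (Ring.choose m' j : ℤ) • W.P (m + n - j) (W.P j x v) y := by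
    simpa [h] using W.commutator_eq_sum_range m' (m + n - m') y hN
  obtain ⟨K, hK⟩ := W.exists_forall_P_add_eq_zero (m + n) v y
  have coeff_eq_zero : ∀ j < N, W.P (m + n - j) (W.P j x v) y = 0 := by
    refine eq_zero_of_sum_choose_smul_eq_zero (m₀ := -K) fun m' hm' ↦ ?_
    have vanishes := hK (-m').toNat (by lia)
    rw [Int.toNat_of_nonneg (by lia), ← sub_eq_add_neg] at vanishes
    rw [← mode_eq_sum, vanishes, map_zero]
  rw [show n = m + n - m by ring, mode_eq_sum m]
  exact sum_eq_zero fun j hj ↦ by rw [coeff_eq_zero j (mem_range.1 hj), smul_zero]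

variable (W) in
/-- The annihilator of a set `S`: all `y` with `x_{(n)} y = 0` for every `x ∈ S` and `n ∈ ℤ`. -/
def annihilator (S : Set V) : Submodule ℂ V :=
  ⨅ x ∈ S, ⨅ n : ℤ, LinearMap.ker (W.P n x)

theorem mem_annihilator {S : Set V} {y : V} :
    y ∈ W.annihilator S ↔ ∀ x ∈ S, ∀ n : ℤ, W.P n x y = 0 := by
  simp [annihilator]

theorem isIdeal_annihilator (S : Set V) : W.IsIdeal (W.annihilator S) := by
  simp only [IsIdeal, mem_annihilator]
  refine ⟨fun y hy x hx n ↦ ?_, fun v y hy n x hx m ↦ P_P_eq_zero_of_annihilates (hy x hx) v m n⟩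
  have leibniz := W.D_deriv n x y
  rwa [hy x hx n, W.transl_inv, hy x hx (n - 1), map_zero, smul_zero, zero_add, eq_comm]
    at leibniz

variable (W) in
/-- A vertex algebra is prime if the product of two nonzero ideals is nonzero. -/
def IsPrime : Prop :=
  ∀ J K : Submodule ℂ V, W.IsIdeal J → W.IsIdeal K →
    (∀ a ∈ J, ∀ b ∈ K, ∀ n : ℤ, W.P n a b = 0) → J = ⊥ ∨ K = ⊥

variable (W) in
/-- The vertex algebra analogue of a ring without zero divisors: `Y(x, z) y = 0` only if `x = 0` or
`y = 0`. -/
def IsDomain : Prop := ∀ x y : V, (∀ n : ℤ, W.P n x y = 0) → x = 0 ∨ y = 0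

theorem IsPrime.isDomain (hprime : W.IsPrime) : W.IsDomain := by
  intro x y hxy
  have annihilate : ∀ a ∈ W.annihilator (W.annihilator {x}), ∀ b ∈ W.annihilator {x},
      ∀ n : ℤ, W.P n a b = 0 :=
    fun a ha b hb ↦ P_swap_eq_zero (mem_annihilator.1 ha b hb)
  refine (hprime _ _ (isIdeal_annihilator _) (isIdeal_annihilator _) annihilate).imp
    (fun bot ↦ ?_) fun bot ↦ ?_
  · have : x ∈ W.annihilator (W.annihilator {x}) :=
      mem_annihilator.2 fun b hb ↦ P_swap_eq_zero (mem_annihilator.1 hb x rfl)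
    rwa [bot] at this
  · have : y ∈ W.annihilator {x} := mem_annihilator.2 fun _ hz ↦ hz ▸ hxy
    rwa [bot] at this

end Annihilator

end VertexAlgebra

/-! ### Finiteness over `ℂ[T]` -/

theorem exists_finset_card_le_span_eq (R M : Type*) [CommRing R] [IsDomain R]
    [IsPrincipalIdealRing R] [AddCommGroup M] [Module R M] [Module.Finite R M] :
    ∃ m : ℕ, ∀ N : Submodule R M, ∃ s : Finset M, s.card ≤ m ∧ Submodule.span R s = N := by
  classical
  obtain ⟨m, f, hf⟩ := Module.Finite.exists_fin' R M
  refine ⟨m, fun N ↦ ?_⟩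
  obtain ⟨k, ⟨b⟩⟩ := Submodule.nonempty_basis_of_pid (Pi.basisFun R (Fin m)) (N.comap f)
  have k_le : k ≤ m := by
    simpa [Module.finrank_eq_card_basis b] using Submodule.finrank_le (N.comap f)
  have span_basis : Submodule.span R (Set.range fun i ↦ (b i : Fin m → R)) = N.comap f := by
    rw [show (fun i ↦ (b i : Fin m → R)) = (N.comap f).subtype ∘ b from rfl, Set.range_comp,
      ← Submodule.map_span, b.span_eq, Submodule.map_top, Submodule.range_subtype]
  refine ⟨univ.image fun i ↦ f (b i), card_image_le.trans (by simpa using k_le), ?_⟩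
  calc Submodule.span R (univ.image fun i ↦ f (b i) : Finset M)
      = (Submodule.span R (Set.range fun i ↦ (b i : Fin m → R))).map f := by
        rw [Submodule.map_span, ← Set.range_comp, coe_image, coe_univ, Set.image_univ]
        rfl
    _ = N := by rw [span_basis, Submodule.map_comap_eq_of_surjective hf N]

theorem map_aeval_eq_coeff_zero_smul {K M E : Type*} [CommRing K] [AddCommGroup M] [Module K M]
    [AddCommGroup E] [Module K E] {f : Module.End K M} {S : Submodule K M}
    (hS : S ∈ f.invtSubmodule) {L : M →ₗ[K] E} (hL : ∀ x ∈ S, L (f x) = 0) (p : K[X]) {x : M}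
    (hx : x ∈ S) : L (aeval f p x) = p.coeff 0 • L x := by
  have mem : aeval f p.divX x ∈ S := aeval_apply_smul_mem_of_le_comap' hx _ f hS
  have aeval_eq : aeval f p x = f (aeval f p.divX x) + p.coeff 0 • x := by
    conv_lhs => rw [← p.X_mul_divX_add]
    simp only [map_add, map_mul, aeval_X, aeval_C, LinearMap.add_apply, Module.End.mul_apply,
      Module.algebraMap_end_apply]
  rw [aeval_eq, map_add, hL _ mem, zero_add, map_smul]

theorem exists_finrank_map_le {K M : Type*} (E : Type*) [Field K] [AddCommGroup M] [Module K M]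
    [AddCommGroup E] [Module K E] (f : Module.End K M) [Module.Finite K[X] (Module.AEval' f)] :
    ∃ m : ℕ, ∀ S ∈ f.invtSubmodule, ∀ L : M →ₗ[K] E, (∀ x ∈ S, L (f x) = 0) →
      FiniteDimensional K (S.map L) ∧ Module.finrank K (S.map L) ≤ m := by
  classical
  obtain ⟨m, hm⟩ := exists_finset_card_le_span_eq K[X] (Module.AEval' f)
  refine ⟨m, fun S hS L hL ↦ ?_⟩
  obtain ⟨s, s_card, s_span⟩ := hm (Module.AEval.mapSubmodule K M f ⟨S, hS⟩)
  set t : Finset E := s.image (L ∘ (Module.AEval'.of f).symm)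
  have map_le : S.map L ≤ Submodule.span K t := by
    have mem_span : ∀ y ∈ Submodule.span K[X] (s : Set (Module.AEval' f)),
        L ((Module.AEval'.of f).symm y) ∈ Submodule.span K t := fun y hy ↦ by
      induction hy using Submodule.span_induction with
      | mem y hy => exact Submodule.subset_span (mem_image_of_mem _ hy)
      | zero => simp
      | add y z _ _ hy hz => simpa using add_mem hy hz
      | smul p y hy ih =>
        have hyS : (Module.AEval'.of f).symm y ∈ S := by simpa [s_span] using hy
        rw [Module.AEval.of_symm_smul, Module.End.smul_def,
          map_aeval_eq_coeff_zero_smul hS hL p hyS]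
        exact Submodule.smul_mem _ _ ih
    rintro _ ⟨x, hx, rfl⟩
    simpa using mem_span (Module.AEval'.of f x) (by simpa [s_span] using hx)
  have := FiniteDimensional.span_finset K t
  exact ⟨Submodule.finiteDimensional_of_le map_le, (Submodule.finrank_mono map_le).trans
    ((finrank_span_finset_le_card t).trans (card_image_le.trans s_card))⟩

namespace VertexAlgebra

section Finiteness

variable {V : Type*} [AddCommGroup V] [Module ℂ V] {W : VertexAlgebra V}

theorem IsFinite.module_finite (hfin : W.IsFinite) :
    Module.Finite ℂ[X] (Module.AEval' W.D) := by
  classical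
  obtain ⟨s, hs⟩ := hfin
  refine ⟨s.image (Module.AEval'.of W.D), eq_top_iff.2 fun v _ ↦ ?_⟩
  obtain ⟨v, rfl⟩ := (Module.AEval'.of W.D).surjective v
  set N := Submodule.span ℂ[X] (s.image (Module.AEval'.of W.D) : Set (Module.AEval' W.D))
  suffices Submodule.span ℂ {x | ∃ g ∈ s, ∃ k : ℕ, x = (W.D ^ k) g} ≤
      (N.restrictScalars ℂ).comap (Module.AEval'.of W.D).toLinearMap from this (hs v)
  rw [Submodule.span_le]
  rintro _ ⟨g, hg, k, rfl⟩
  change Module.AEval'.of W.D (W.D ^ k • g) ∈ N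
  rw [← Module.AEval'.X_pow_smul_of]
  exact N.smul_mem _ (Submodule.subset_span (mem_image_of_mem _ hg))

theorem IsFinite.wellFoundedGT_invtSubmodule (hfin : W.IsFinite) :
    WellFoundedGT (Module.End.invtSubmodule W.D) :=
  have := hfin.module_finite
  (Module.AEval.mapSubmodule ℂ V W.D).strictMono.wellFoundedGT

theorem IsFinite.exists_maximal (hfin : W.IsFinite) {p : Submodule ℂ V → Prop}
    (hp : ∀ I, p I → I ∈ Module.End.invtSubmodule W.D) (hne : ∃ I, p I) :
    ∃ I, Maximal p I := by
  have := hfin.wellFoundedGT_invtSubmodule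
  obtain ⟨I₀, hI₀⟩ := hne
  obtain ⟨I, hI, hmax⟩ := wellFounded_gt.has_min
    {I : Module.End.invtSubmodule W.D | p I} ⟨⟨I₀, hp I₀ hI₀⟩, hI₀⟩
  refine ⟨I, hI, fun J hJ hIJ ↦ ?_⟩
  by_contra hJI
  exact hmax ⟨J, hp J hJ⟩ hJ (lt_of_le_not_ge hIJ hJI)

theorem IsFinite.exists_succ_le (hfin : W.IsFinite) {S : ℕ → Submodule ℂ V} (hS : Monotone S)
    (hS' : ∀ m, S m ∈ Module.End.invtSubmodule W.D) : ∃ m, S (m + 1) ≤ S m := by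
  have := hfin.wellFoundedGT_invtSubmodule
  obtain ⟨m, hm⟩ := WellFoundedGT.monotone_chain_condition
    (⟨fun m ↦ ⟨S m, hS' m⟩, hS⟩ : ℕ →o Module.End.invtSubmodule W.D)
  exact ⟨m, (Subtype.ext_iff.1 (hm (m + 1) m.le_succ)).ge⟩

end Finiteness

end VertexAlgebra

/-! ### Linear algebra -/

section LinearAlgebra

theorem apply_eq_zero_of_aeval_apply_eq_zero {K E : Type*} [Field K] [IsAlgClosed K]
    [AddCommGroup E] [Module K E] {f : Module.End K E} (hf : ∀ μ ≠ 0, ¬ f.HasEigenvalue μ)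
    (hf' : ∀ x, f (f x) = 0 → f x = 0) {p : K[X]} (hp : p ≠ 0) {x : E} (hx : aeval f p x = 0) :
    f x = 0 := by
  induction hn : p.natDegree generalizing p x with
  | zero =>
    obtain ⟨c, rfl⟩ := natDegree_eq_zero.1 hn
    rw [aeval_C, Module.algebraMap_end_apply] at hx
    rw [(smul_eq_zero.1 hx).resolve_left (C_ne_zero.1 hp), map_zero]
  | succ n ih =>
    obtain ⟨μ, hμ⟩ := IsAlgClosed.exists_root p (degree_ne_of_natDegree_ne (hn ▸ n.succ_ne_zero))
    obtain ⟨q, rfl⟩ := dvd_iff_isRoot.2 hμ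
    have hq : q ≠ 0 := right_ne_zero_of_mul hp
    have deg_q : q.natDegree = n := by
      rw [natDegree_mul (X_sub_C_ne_zero μ) hq, natDegree_X_sub_C] at hn
      lia
    have hfx : f (f x - μ • x) = 0 := ih hq (by simpa [mul_comm] using hx) deg_q
    rw [map_sub, map_smul, sub_eq_zero] at hfx
    by_cases hμ0 : μ = 0
    · exact hf' x (by rw [hfx, hμ0, zero_smul])
    · by_contra hne
      exact hf μ hμ0 (Module.End.hasEigenvalue_of_hasEigenvector
        ⟨Module.End.mem_eigenspace_iff.2 hfx, hne⟩)

variable {A : Type*} [Ring A]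

theorem lie_pow_eq_nsmul {t e : A} (h : Commute ⁅t, e⁆ t) (n : ℕ) :
    ⁅t ^ n, e⁆ = n • (t ^ (n - 1) * ⁅t, e⁆) := by
  induction n with
  | zero => simp [Ring.lie_def]
  | succ n ih =>
    have leibniz : ⁅t ^ (n + 1), e⁆ = t * ⁅t ^ n, e⁆ + ⁅t, e⁆ * t ^ n := by
      simp only [Ring.lie_def, pow_succ']
      noncomm_ring
    rw [leibniz, ih, (h.pow_right n).eq]
    rcases n with _ | n
    · simp
    · rw [mul_smul_comm, ← mul_assoc, Nat.add_sub_cancel, Nat.add_sub_cancel, ← pow_succ',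
        ← succ_nsmul]

variable {R : Type*} [CommRing R] {f : R →+* A} {t e : A}

theorem lie_eval₂_eq_eval₂_derivative_mul (hfe : ∀ r, Commute (f r) e) (ht : Commute ⁅t, e⁆ t)
    (Q : R[X]) : ⁅eval₂ f t Q, e⁆ = eval₂ f t (derivative Q) * ⁅t, e⁆ := by
  induction Q using Polynomial.induction_on' with
  | add p q hp hq =>
    rw [eval₂_add, derivative_add, eval₂_add, add_mul, ← hp, ← hq, Ring.lie_def, Ring.lie_def,
      Ring.lie_def]
    noncomm_ring
  | monomial n r =>
    have pull_out : ⁅f r * t ^ n, e⁆ = f r * ⁅t ^ n, e⁆ := by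
      rw [Ring.lie_def, Ring.lie_def, mul_sub, mul_assoc, ← mul_assoc e, ← (hfe r).eq, mul_assoc]
    rw [eval₂_monomial, derivative_monomial, eval₂_monomial, pull_out, lie_pow_eq_nsmul ht,
      map_mul, map_natCast, ← nsmul_eq_mul', smul_mul_assoc, mul_smul_comm, smul_mul_assoc,
      mul_assoc]

theorem commute_eval₂ {c : A} (hfc : ∀ r, Commute (f r) c) (hc : Commute c t) (Q : R[X]) :
    Commute c (eval₂ f t Q) := by
  induction Q using Polynomial.induction_on' with
  | add p q hp hq => exact eval₂_add f t (p := p) (q := q) ▸ hp.add_right hq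
  | monomial n r => exact eval₂_monomial f t (n := n) (r := r) ▸
      (hfc r).symm.mul_right (hc.pow_right n)

theorem commute_aeval [Algebra R A] {s c : A} (hc : Commute s c) (p : R[X]) :
    Commute (aeval s p) c :=
  (commute_eval₂ (fun r ↦ Algebra.commutes r c) hc.symm p).symm

/-- A Kleinecke–Shirokov type argument: bracketing a relation for `t` with `e` differentiates it,
until only the leading coefficient is left. -/
theorem exists_map_coeff_mul_lie_pow_eq_zero [IsAddTorsionFree A] (hfe : ∀ r, Commute (f r) e)
    (hfc : ∀ r, Commute (f r) ⁅t, e⁆) (ht : Commute ⁅t, e⁆ t) {n : ℕ} {Q : R[X]}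
    (hQ : Q.natDegree ≤ n) {N : ℕ} (h : eval₂ f t Q * ⁅t, e⁆ ^ N = 0) :
    ∃ N', f (Q.coeff n) * ⁅t, e⁆ ^ N' = 0 := by
  induction n generalizing Q N with
  | zero =>
    rw [eq_C_of_natDegree_le_zero hQ, eval₂_C] at h
    exact ⟨N, h⟩
  | succ n ih =>
    set c := ⁅t, e⁆
    have comm (Q : R[X]) : Commute (c ^ N) (eval₂ f t Q) := (commute_eval₂ hfc ht Q).pow_left N
    have derivative_relation : eval₂ f t (derivative Q) * c ^ (1 + 2 * N) = 0 :=
      calc eval₂ f t (derivative Q) * c ^ (1 + 2 * N)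
          = c ^ N * ⁅eval₂ f t Q, e⁆ * c ^ N := by
            rw [lie_eval₂_eq_eval₂_derivative_mul hfe ht, ← mul_assoc, (comm _).eq, mul_assoc,
              mul_assoc, ← pow_succ', ← pow_add]
            congr 2
            lia
        _ = 0 := by
            rw [Ring.lie_def, mul_sub, ← mul_assoc, (comm Q).eq, h, zero_mul, zero_sub, neg_mul,
              mul_assoc, mul_assoc, h, mul_zero, mul_zero, neg_zero]
    obtain ⟨N', hN'⟩ := ih ((natDegree_derivative_le Q).trans (by lia)) derivative_relation
    refine ⟨N', ?_⟩
    rw [coeff_derivative, ← Nat.cast_succ, map_mul, map_natCast, ← nsmul_eq_mul',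
      smul_mul_assoc] at hN'
    exact (nsmul_eq_zero_iff_right n.succ_ne_zero).1 hN'

theorem eval₂_aeval_swap [Algebra R A] {s t : A} (hst : Commute s t) (Q : R[X][X]) :
    eval₂ (aeval s).toRingHom t (Bivariate.swap Q) = eval₂ (aeval t).toRingHom s Q := by
  induction Q using Polynomial.induction_on' with
  | add p q hp hq => rw [map_add, eval₂_add, eval₂_add, hp, hq]
  | monomial n p =>
    induction p using Polynomial.induction_on' with
    | add p q hp hq => rw [map_add, map_add, eval₂_add, eval₂_add, hp, hq]
    | monomial m r =>
      rw [Bivariate.swap_monomial_monomial, eval₂_monomial, eval₂_monomial]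
      change aeval s (monomial n r) * t ^ m = aeval t (monomial m r) * s ^ n
      rw [aeval_monomial, aeval_monomial, mul_assoc, mul_assoc, (hst.pow_pow n m).eq]

theorem exists_apply_eq_smul_apply {K E E' : Type*} [Field K] [IsAlgClosed K] [AddCommGroup E]
    [Module K E] [AddCommGroup E'] [Module K E'] {f g : E →ₗ[K] E'} {S : Submodule K E}
    [FiniteDimensional K (S.map f)] (hf : S.map f ≠ ⊥) (hgf : S.map g ≤ S.map f) :
    ∃ c ∈ S, ∃ μ : K, f c ≠ 0 ∧ g c = μ • f c := by
  obtain ⟨r, hr⟩ := (f.submoduleMap S).exists_rightInverse_of_surjective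
    (LinearMap.range_eq_top.2 (f.submoduleMap_surjective S))
  have : Nontrivial (S.map f) := Submodule.nontrivial_iff_ne_bot.2 hf
  obtain ⟨μ, hμ⟩ := Module.End.exists_eigenvalue
    (Submodule.inclusion hgf ∘ₗ g.submoduleMap S ∘ₗ r)
  obtain ⟨y, hy, hy0⟩ := hμ.exists_hasEigenvector
  have hfy : f (r y) = y := congrArg Subtype.val (LinearMap.congr_fun hr y)
  have hgy : g (r y) = μ • (y : E') :=
    congrArg Subtype.val (Module.End.mem_eigenspace_iff.1 hy)
  exact ⟨r y, (r y).2, μ, by rwa [hfy, ne_eq, Submodule.coe_eq_zero], by rw [hgy, hfy]⟩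

theorem exists_ge_eq_succ_of_finrank_le {K E : Type*} [Field K] [AddCommGroup E] [Module K E]
    {S : ℕ → Submodule K E} (hS : Monotone S) {m : ℕ}
    (hm : ∀ l, FiniteDimensional K (S l) ∧ Module.finrank K (S l) ≤ m) (k : ℕ) :
    ∃ l ≥ k, S l = S (l + 1) := by
  by_contra! hne
  have growth (i : ℕ) : i ≤ Module.finrank K (S (k + i)) := by
    induction i with
    | zero => exact Nat.zero_le _
    | succ i ih =>
      have := (hm (k + i + 1)).1
      exact ih.trans_lt (Submodule.finrank_lt_finrank_of_lt
        ((hS (k + i).le_succ).lt_of_ne (hne _ (Nat.le_add_right k i))))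
  exact (growth (m + 1)).not_gt (Nat.lt_succ_of_le (hm _).2)

end LinearAlgebra

namespace VertexAlgebra

/-! ### Derivations -/

section Derivations

variable {V : Type*} [AddCommGroup V] [Module ℂ V] {W : VertexAlgebra V}

variable (W) in
/-- The Lie algebra of derivations of all products that commute with the translation operator. -/
def derivations : LieSubalgebra ℂ (Module.End ℂ V) where
  carrier := {d | Commute W.D d ∧ ∀ n x y, d (W.P n x y) = W.P n (d x) y + W.P n x (d y)}
  add_mem' := by
    rintro d e ⟨hd, hd'⟩ ⟨he, he'⟩
    refine ⟨hd.add_right he, fun n x y ↦ ?_⟩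
    simp only [LinearMap.add_apply, hd', he', map_add]
    abel
  zero_mem' := by simp
  smul_mem' := by
    rintro c d ⟨hd, hd'⟩
    exact ⟨hd.smul_right c, fun n x y ↦ by simp [hd']⟩
  lie_mem' := by
    rintro d e ⟨hd, hd'⟩ ⟨he, he'⟩
    refine ⟨(hd.mul_right he).sub_right (he.mul_right hd), fun n x y ↦ ?_⟩
    simp only [Ring.lie_def, LinearMap.sub_apply, Module.End.mul_apply, hd', he', map_add, map_sub]
    abel

theorem D_mem_derivations : W.D ∈ W.derivations := ⟨Commute.refl _, W.D_deriv⟩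

theorem commute_D {d : Module.End ℂ V} (hd : d ∈ W.derivations) : Commute W.D d := hd.1

theorem derivation_P {d : Module.End ℂ V} (hd : d ∈ W.derivations) (n : ℤ) (x y : V) :
    d (W.P n x y) = W.P n (d x) y + W.P n x (d y) := hd.2 n x y

theorem IsDomain.exists_P_ne_zero (hdom : W.IsDomain) {x y : V} (hx : x ≠ 0) (hy : y ≠ 0) :
    ∃ n, W.P n x y ≠ 0 := by
  by_contra! h
  exact (hdom x y h).elim hx hy

theorem ker_mem_invtSubmodule {f : Module.End ℂ V} (hf : Commute W.D f) :
    LinearMap.ker f ∈ Module.End.invtSubmodule W.D := fun x hx ↦ by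
  change f (W.D x) = 0
  rw [← Module.End.mul_apply, ← hf.eq, Module.End.mul_apply, LinearMap.mem_ker.1 hx, map_zero]

theorem IsFinite.finite_hasEigenvalue (hfin : W.IsFinite) {d : Module.End ℂ V}
    (hd : Commute W.D d) : {μ | d.HasEigenvalue μ}.Finite := by
  by_contra hinf
  set μ : ℕ ↪ {μ | d.HasEigenvalue μ} := Set.Infinite.natEmbedding _ hinf
  have stable (ν : ℂ) : d.eigenspace ν ∈ Module.End.invtSubmodule W.D := by
    rw [Module.End.eigenspace_def]
    exact ker_mem_invtSubmodule (hd.sub_right (Algebra.commutes ν W.D).symm)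
  obtain ⟨m, hm⟩ := hfin.exists_succ_le (S := fun m ↦ ⨆ i < m, d.eigenspace (μ i))
    (fun a b hab ↦ biSup_mono fun i hi ↦ lt_of_lt_of_le hi hab)
    (fun m ↦ iSup₂_le fun i hi ↦ (stable _).trans
      (Submodule.comap_mono (le_iSup₂ (f := fun i (_ : i < m) ↦ d.eigenspace (μ i)) i hi)))
  have indep := (Module.End.eigenspaces_iSupIndep d).comp (Subtype.val_injective.comp μ.injective)
  refine (μ m).2 (disjoint_self.1 ((indep m).mono_right ?_))
  calc d.eigenspace (μ m)
      ≤ ⨆ i < m + 1, d.eigenspace (μ i) :=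
        le_iSup₂ (f := fun i (_ : i < m + 1) ↦ d.eigenspace (μ i)) m m.lt_succ_self
    _ ≤ ⨆ i < m, d.eigenspace (μ i) := hm
    _ ≤ ⨆ i ≠ m, d.eigenspace (μ i) := biSup_mono fun i hi ↦ hi.ne

theorem pow_succ_derivation_P {d : Module.End ℂ V} (hd : d ∈ W.derivations) {x : V}
    (hx : d (d x) = 0) (n : ℤ) (w : V) (k : ℕ) :
    (d ^ (k + 1)) (W.P n x w) =
      W.P n x ((d ^ (k + 1)) w) + (k + 1) • W.P n (d x) ((d ^ k) w) := by
  induction k with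
  | zero => simp [derivation_P hd, add_comm]
  | succ k ih =>
    rw [pow_succ', Module.End.mul_apply, ih, map_add, map_nsmul, derivation_P hd, derivation_P hd,
      hx, map_zero, LinearMap.zero_apply, zero_add, ← Module.End.mul_apply d,
      ← Module.End.mul_apply d, ← pow_succ', ← pow_succ', succ_nsmul _ (k + 1)]
    abel

theorem derivation_apply_eq_zero_of_sq (hfin : W.IsFinite) (hdom : W.IsDomain) {d : Module.End ℂ V}
    (hd : d ∈ W.derivations) {x : V} (hx : d (d x) = 0) : d x = 0 := by
  by_contra hdx
  have : IsAddTorsionFree V := .of_isTorsionFree ℂ V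
  -- Multiplying by `x` repeatedly produces vectors of every nilpotency order.
  have exists_order (m : ℕ) : ∃ w, (d ^ m) w ≠ 0 ∧ (d ^ (m + 1)) w = 0 := by
    induction m with
    | zero => exact ⟨d x, by simpa using hdx, by simpa using hx⟩
    | succ m ih =>
      obtain ⟨w, hw, hw'⟩ := ih
      obtain ⟨n, hn⟩ := hdom.exists_P_ne_zero hdx hw
      refine ⟨W.P n x w, ?_, ?_⟩
      · rw [pow_succ_derivation_P hd hx, hw', map_zero, zero_add]
        exact (nsmul_eq_zero_iff_right m.succ_ne_zero).not.2 hn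
      · rw [pow_succ_derivation_P hd hx, hw', pow_succ', Module.End.mul_apply, hw']
        simp only [map_zero, smul_zero, add_zero]
  obtain ⟨m, hm⟩ := hfin.exists_succ_le (S := fun m ↦ LinearMap.ker (d ^ m))
    (monotone_nat_of_le_succ fun m y hy ↦ by
      rw [LinearMap.mem_ker] at hy ⊢
      rw [pow_succ', Module.End.mul_apply, hy, map_zero])
    fun m ↦ ker_mem_invtSubmodule ((commute_D hd).pow_right m)
  obtain ⟨w, hw, hw'⟩ := exists_order m
  exact hw (hm hw')

theorem derivation_apply_eq_zero_of_pow_apply_eq_zero (hfin : W.IsFinite) (hdom : W.IsDomain)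
    {d : Module.End ℂ V} (hd : d ∈ W.derivations) {N : ℕ} {x : V} (hx : (d ^ N) x = 0) :
    d x = 0 := by
  induction N generalizing x with
  | zero => rw [show x = 0 from hx, map_zero]
  | succ N ih => exact derivation_apply_eq_zero_of_sq hfin hdom hd (ih (by rwa [pow_succ] at hx))

theorem not_hasEigenvalue_derivation (hfin : W.IsFinite) (hdom : W.IsDomain)
    {d : Module.End ℂ V} (hd : d ∈ W.derivations) {μ : ℂ} (hμ : μ ≠ 0) : ¬ d.HasEigenvalue μ := by
  intro hasEigenvalue
  obtain ⟨y, hy, hy0⟩ := hasEigenvalue.exists_hasEigenvector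
  rw [Module.End.mem_eigenspace_iff] at hy
  -- Products of eigenvectors are eigenvectors for the sum of the eigenvalues.
  have hasEigenvalue_mul (m : ℕ) : d.HasEigenvalue (((m : ℂ) + 1) * μ) := by
    induction m with
    | zero => simpa using hasEigenvalue
    | succ m ih =>
      obtain ⟨w, hw, hw0⟩ := ih.exists_hasEigenvector
      rw [Module.End.mem_eigenspace_iff] at hw
      obtain ⟨n, hn⟩ := hdom.exists_P_ne_zero hy0 hw0
      refine Module.End.hasEigenvalue_of_hasEigenvector (x := W.P n y w)
        ⟨Module.End.mem_eigenspace_iff.2 ?_, hn⟩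
      rw [derivation_P hd, hy, hw]
      simp only [map_smul, LinearMap.smul_apply, Nat.cast_succ]
      module
  have injective : Function.Injective fun m : ℕ ↦ ((m : ℂ) + 1) * μ := fun m k hmk ↦ by
    simpa [hμ] using hmk
  exact Set.infinite_of_injective_forall_mem injective hasEigenvalue_mul
    (hfin.finite_hasEigenvalue (commute_D hd))

theorem derivation_apply_eq_zero_of_aeval_apply_eq_zero (hfin : W.IsFinite) (hdom : W.IsDomain)
    {d : Module.End ℂ V} (hd : d ∈ W.derivations) {q : ℂ[X]} (hq : q ≠ 0) {x : V}
    (h : aeval d q x = 0) : d x = 0 :=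
  apply_eq_zero_of_aeval_apply_eq_zero (fun _ ↦ not_hasEigenvalue_derivation hfin hdom hd)
    (fun _ ↦ derivation_apply_eq_zero_of_sq hfin hdom hd) hq h

theorem P_eq_zero_of_D_eq_zero {x : V} (hx : W.D x = 0) {n : ℤ} (hn : n ≠ -1) : W.P n x = 0 := by
  ext b
  have transl := W.transl_inv (n + 1) x b
  rw [hx, map_zero, LinearMap.zero_apply, add_sub_cancel_right, eq_comm, smul_eq_zero] at transl
  refine transl.resolve_left ?_
  rw [neg_eq_zero, Int.cast_eq_zero]
  lia

theorem exists_eq_smul_vac_of_D_eq_zero (hfin : W.IsFinite) (hdom : W.IsDomain) {x : V}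
    (hx : W.D x = 0) : ∃ α : ℂ, x = α • W.vac := by
  by_cases hvac : W.vac = 0
  · exact ⟨0, by rw [← W.creation x, hvac, map_zero, smul_zero]⟩
  have := hfin.module_finite
  obtain ⟨_, hm⟩ := exists_finrank_map_le V W.D
  have finite_ker : FiniteDimensional ℂ (LinearMap.ker W.D) := by
    have := (hm _ (ker_mem_invtSubmodule (Commute.refl W.D)) LinearMap.id fun _ h ↦ h).1
    rwa [Submodule.map_id] at this
  have nontrivial_ker : Nontrivial (LinearMap.ker W.D) :=
    ⟨⟨W.vac, W.D_vac⟩, 0, fun h ↦ hvac (Subtype.ext_iff.1 h)⟩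
  have maps_ker : ∀ y ∈ LinearMap.ker W.D, W.P (-1) x y ∈ LinearMap.ker W.D := fun y hy ↦ by
    rw [LinearMap.mem_ker] at hy ⊢
    simp [W.D_deriv, hx, hy]
  obtain ⟨α, hα⟩ := Module.End.exists_eigenvalue ((W.P (-1) x).restrict maps_ker)
  obtain ⟨⟨w, _⟩, hw, hw0⟩ := hα.exists_hasEigenvector
  have hxw : W.P (-1) x w = α • w := Subtype.ext_iff.1 (Module.End.mem_eigenspace_iff.1 hw)
  refine ⟨α, sub_eq_zero.1 ((hdom (x - α • W.vac) w fun n ↦ ?_).resolve_right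
    fun h ↦ hw0 (Subtype.ext h))⟩
  rw [map_sub, map_smul, LinearMap.sub_apply, LinearMap.smul_apply, W.vac_field]
  split_ifs with hn
  · rw [hn, hxw, sub_self]
  · simp [P_eq_zero_of_D_eq_zero hx hn]

theorem exists_monic_eval₂_eq_zero (hfin : W.IsFinite) {d : Module.End ℂ V} (hd : Commute W.D d) :
    ∃ Q : ℂ[X][X], Q.Monic ∧ eval₂ (aeval W.D).toRingHom d Q = 0 := by
  have := hfin.module_finite
  let f : Module.End ℂ[X] (Module.AEval' W.D) :=
    LinearMap.ofAEval W.D ((Module.AEval'.of W.D).toLinearMap ∘ₗ d) fun x ↦ by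
      change Module.AEval'.of W.D (d (W.D x)) = X • Module.AEval'.of W.D (d x)
      rw [Module.AEval'.X_smul_of, ← Module.End.mul_apply, ← hd.eq, Module.End.mul_apply]
  obtain ⟨Q, hQ, hfQ⟩ := LinearMap.exists_monic_and_aeval_eq_zero ℂ[X] f
  refine ⟨Q, hQ, LinearMap.ext fun x ↦ (Module.AEval'.of W.D).injective ?_⟩
  have f_pow (n : ℕ) : (f ^ n) (Module.AEval'.of W.D x) = Module.AEval'.of W.D ((d ^ n) x) := by
    induction n with
    | zero => rfl
    | succ n ih => rw [pow_succ', pow_succ', Module.End.mul_apply, ih]; rfl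
  have eval₂_eq (Q : ℂ[X][X]) : Module.AEval'.of W.D (eval₂ (aeval W.D).toRingHom d Q x) =
      aeval f Q (Module.AEval'.of W.D x) := by
    induction Q using Polynomial.induction_on' with
    | add p q hp hq => rw [map_add, eval₂_add, LinearMap.add_apply, LinearMap.add_apply, map_add,
        hp, hq]
    | monomial n r =>
      rw [eval₂_monomial, aeval_monomial, Module.End.mul_apply, Module.End.mul_apply, f_pow]
      exact Module.AEval.of_aeval_smul W.D r ((d ^ n) x)
  rw [eval₂_eq, hfQ, LinearMap.zero_apply, LinearMap.zero_apply, map_zero]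

theorem lie_eq_zero_of_commute (hfin : W.IsFinite) (hdom : W.IsDomain) {d e : Module.End ℂ V}
    (hd : d ∈ W.derivations) (he : e ∈ W.derivations) (h : Commute ⁅d, e⁆ d) : ⁅d, e⁆ = 0 := by
  have : IsAddTorsionFree (Module.End ℂ V) := .of_isTorsionFree ℂ _
  have hc : ⁅d, e⁆ ∈ W.derivations := LieSubalgebra.lie_mem _ hd he
  obtain ⟨Q, hQ, hQd⟩ := exists_monic_eval₂_eq_zero hfin (commute_D hd)
  obtain ⟨N, hN⟩ := exists_map_coeff_mul_lie_pow_eq_zero (f := (aeval W.D).toRingHom)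
    (commute_aeval (commute_D he)) (commute_aeval (commute_D hc)) h (N := 0) le_rfl
    (Q := Q) (by rw [hQd, zero_mul])
  rw [hQ.coeff_natDegree, map_one, one_mul] at hN
  exact LinearMap.ext fun x ↦ derivation_apply_eq_zero_of_pow_apply_eq_zero hfin hdom hc
    (LinearMap.congr_fun hN x)

theorem eq_zero_of_lie_eq_smul (hfin : W.IsFinite) (hdom : W.IsDomain) {d b : Module.End ℂ V}
    (hd : d ∈ W.derivations) (hb : b ∈ W.derivations) {ρ : ℂ} (hρ : ρ ≠ 0)
    (h : ⁅d, b⁆ = ρ • b) : b = 0 := by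
  have lie_eq : ⁅b, d⁆ = -(ρ • b) := by rw [← lie_skew, h]
  have := lie_eq_zero_of_commute hfin hdom hb hd
    (lie_eq ▸ ((Commute.refl b).smul_left ρ).neg_left)
  simpa [lie_eq, hρ] using this

theorem derivation_eq_zero_of_mul_eq_zero (hfin : W.IsFinite) (hdom : W.IsDomain)
    {d e : Module.End ℂ V} (hd : d ∈ W.derivations) (he : e ∈ W.derivations) (he0 : e ≠ 0)
    (hde : d * e = 0) (hed : e * d = 0) : d = 0 := by
  have mul_apply_eq_zero {f g : Module.End ℂ V} (h : f * g = 0) (x : V) : f (g x) = 0 :=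
    LinearMap.congr_fun h x
  by_contra hd0
  obtain ⟨x, hx⟩ := DFunLike.ne_iff.1 hd0
  obtain ⟨y, hy⟩ := DFunLike.ne_iff.1 he0
  obtain ⟨n, hn⟩ := hdom.exists_P_ne_zero
    (mt (derivation_apply_eq_zero_of_sq hfin hdom hd) hx)
    (mt (derivation_apply_eq_zero_of_sq hfin hdom he) hy)
  have := mul_apply_eq_zero hed (W.P n (d x) (e y))
  rw [derivation_P hd, mul_apply_eq_zero hde, map_zero, add_zero, derivation_P he,
    mul_apply_eq_zero hed, map_zero, LinearMap.zero_apply, zero_add] at this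
  exact hn this

theorem derivation_eq_zero_of_commute (hfin : W.IsFinite) (hdom : W.IsDomain)
    {d e : Module.End ℂ V} (hd : d ∈ W.derivations) (he : ⁅W.D, e⁆ ∈ W.derivations)
    (he0 : ⁅W.D, e⁆ ≠ 0) (hde : Commute d e) : d = 0 := by
  have : IsAddTorsionFree (Module.End ℂ V) := .of_isTorsionFree ℂ _
  obtain ⟨Q, hQ, hQd⟩ := exists_monic_eval₂_eq_zero hfin (commute_D hd)
  have swap_ne_zero : Bivariate.swap Q ≠ 0 :=
    (map_ne_zero_iff _ (Bivariate.swap (R := ℂ)).injective).2 hQ.ne_zero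
  have hdc : Commute d ⁅W.D, e⁆ :=
    ((commute_D hd).symm.mul_right hde).sub_right (hde.mul_right (commute_D hd).symm)
  obtain ⟨N, hN⟩ := exists_map_coeff_mul_lie_pow_eq_zero (f := (aeval d).toRingHom)
    (commute_aeval hde) (commute_aeval hdc) (commute_D he).symm (N := 0) le_rfl
    (Q := Bivariate.swap Q) (by rw [eval₂_aeval_swap (commute_D hd).symm, hQd, zero_mul])
  have mul_eq_zero : ⁅W.D, e⁆ * d = 0 := LinearMap.ext fun x ↦ by
    refine derivation_apply_eq_zero_of_pow_apply_eq_zero hfin hdom he (N := N) ?_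
    rw [← Module.End.mul_apply, ← (hdc.pow_right N).eq, Module.End.mul_apply]
    exact derivation_apply_eq_zero_of_aeval_apply_eq_zero hfin hdom hd
      (leadingCoeff_ne_zero.2 swap_ne_zero) (LinearMap.congr_fun hN x)
  exact derivation_eq_zero_of_mul_eq_zero hfin hdom hd he he0 (hdc.eq.trans mul_eq_zero)
    mul_eq_zero

end Derivations

/-! ### The filtration by vanishing of the non-negative modes -/

section Filtration

variable {V : Type*} [AddCommGroup V] [Module ℂ V] {W : VertexAlgebra V}

variable (W) in
/-- The subspace of elements whose modes `b₍₀₎, …, b₍ₗ₋₁₎` vanish. -/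
def filtration (l : ℕ) : Submodule ℂ V := ⨅ j < l, LinearMap.ker (W.P (j : ℕ))

theorem mem_filtration {l : ℕ} {b : V} : b ∈ W.filtration l ↔ ∀ j < l, W.P (j : ℕ) b = 0 := by
  simp [filtration]

theorem mem_filtration_succ {l : ℕ} {b : V} :
    b ∈ W.filtration (l + 1) ↔ b ∈ W.filtration l ∧ W.P l b = 0 := by
  simp only [mem_filtration, Nat.forall_lt_succ_right]

theorem P_D (n : ℤ) (b : V) : W.P n (W.D b) = (-n : ℂ) • W.P (n - 1) b :=
  LinearMap.ext fun x ↦ W.transl_inv n b x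

theorem P_succ_D (l : ℕ) (b : V) :
    W.P ((l + 1 : ℕ) : ℤ) (W.D b) = (-((l : ℂ) + 1)) • W.P l b := by
  rw [P_D]
  push_cast
  rw [add_sub_cancel_right]

theorem D_mem_filtration {l : ℕ} {b : V} (hb : b ∈ W.filtration l) :
    W.D b ∈ W.filtration (l + 1) := by
  rw [mem_filtration] at hb ⊢
  rintro (_ | j) hj
  · simp [P_D]
  · rw [P_succ_D, hb j (Nat.lt_of_succ_lt_succ hj), smul_zero]

theorem filtration_mem_invtSubmodule (l : ℕ) :
    W.filtration l ∈ Module.End.invtSubmodule W.D :=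
  fun _ hb ↦ (mem_filtration_succ.1 (D_mem_filtration hb)).1

theorem P_mem_derivations {l : ℕ} {b : V} (hb : b ∈ W.filtration l) :
    W.P l b ∈ W.derivations := by
  constructor
  · ext x
    have hDb : W.P l (W.D b) = 0 := (mem_filtration_succ.1 (D_mem_filtration hb)).2
    simp [W.D_deriv, hDb]
  · intro k x y
    have commutator := W.commutator_eq_sum_antidiagonal l k b x y
    rw [sum_eq_single (l, 0)] at commutator
    · simpa [sub_eq_iff_eq_add] using commutator
    · rintro ⟨i, j⟩ hij hne
      have hil : i < l := by
        rw [HasAntidiagonal.mem_antidiagonal] at hij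
        simp only [ne_eq, Prod.mk.injEq] at hne
        lia
      rw [mem_filtration.1 hb i hil, LinearMap.zero_apply, map_zero, LinearMap.zero_apply,
        smul_zero]
    · simp

theorem P_derivation {d : Module.End ℂ V} (hd : d ∈ W.derivations) (n : ℤ) (b : V) :
    W.P n (d b) = ⁅d, W.P n b⁆ := by
  ext x
  simp [Ring.lie_def, derivation_P hd]

variable (W) in
/-- The leading modes `b₍ₗ₎` of the elements `b` of the `l`-th step of the filtration. -/
def leadingModes (l : ℕ) : Submodule ℂ (Module.End ℂ V) := (W.filtration l).map (W.P l)

theorem P_mem_leadingModes {l : ℕ} {b : V} (hb : b ∈ W.filtration l) :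
    W.P l b ∈ W.leadingModes l := Submodule.mem_map_of_mem hb

theorem mem_derivations_of_mem_leadingModes {l : ℕ} {x : Module.End ℂ V}
    (hx : x ∈ W.leadingModes l) : x ∈ W.derivations := by
  obtain ⟨b, hb, rfl⟩ := hx
  exact P_mem_derivations hb

theorem lie_mem_leadingModes {d : Module.End ℂ V} (hd : d ∈ W.derivations) {l : ℕ}
    {x : Module.End ℂ V} (hx : x ∈ W.leadingModes l) : ⁅d, x⁆ ∈ W.leadingModes l := by
  obtain ⟨b, hb, rfl⟩ := hx
  rw [← P_derivation hd]
  refine P_mem_leadingModes (mem_filtration.2 fun j hj ↦ ?_)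
  rw [P_derivation hd, mem_filtration.1 hb j hj, lie_zero]

theorem leadingModes_eq_map_D (l : ℕ) :
    W.leadingModes l = (W.filtration l).map (W.P ((l + 1 : ℕ) : ℤ) ∘ₗ W.D) := by
  have hl : -((l : ℂ) + 1) ≠ 0 := neg_ne_zero.2 l.cast_add_one_ne_zero
  have comp_eq : W.P ((l + 1 : ℕ) : ℤ) ∘ₗ W.D = (-((l : ℂ) + 1)) • W.P l :=
    LinearMap.ext (P_succ_D l)
  rw [comp_eq, Submodule.map_smul _ _ _ hl, leadingModes]

theorem leadingModes_mono : Monotone W.leadingModes := monotone_nat_of_le_succ fun l ↦ by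
  rw [leadingModes_eq_map_D, Submodule.map_comp]
  exact Submodule.map_mono (Submodule.map_le_iff_le_comap.2 fun _ ↦ D_mem_filtration)

theorem IsFinite.exists_finrank_leadingModes_le (hfin : W.IsFinite) : ∃ m, ∀ l,
    FiniteDimensional ℂ (W.leadingModes l) ∧ Module.finrank ℂ (W.leadingModes l) ≤ m := by
  have := hfin.module_finite
  obtain ⟨m, hm⟩ := exists_finrank_map_le (Module.End ℂ V) W.D
  exact ⟨m, fun l ↦ hm _ (filtration_mem_invtSubmodule l) (W.P l)
    fun _ hb ↦ (mem_filtration_succ.1 (D_mem_filtration hb)).2⟩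

theorem lie_eq_zero_of_mem_leadingModes (hfin : W.IsFinite) (hdom : W.IsDomain)
    {d : Module.End ℂ V} (hd : d ∈ W.derivations) {l : ℕ} {x : Module.End ℂ V}
    (hx : x ∈ W.leadingModes l) : ⁅d, x⁆ = 0 := by
  obtain ⟨_, hm⟩ := hfin.exists_finrank_leadingModes_le
  have := (hm l).1
  let ad : Module.End ℂ (W.leadingModes l) := (LieAlgebra.ad ℂ (Module.End ℂ V) d).restrict
    fun _ ↦ lie_mem_leadingModes hd
  suffices ad ⟨x, hx⟩ = 0 from congrArg Subtype.val this
  refine apply_eq_zero_of_aeval_apply_eq_zero (p := minpoly ℂ ad) ?_ ?_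
    (minpoly.ne_zero (Algebra.IsIntegral.isIntegral ad))
    (LinearMap.congr_fun (minpoly.aeval ℂ ad) _)
  · intro μ hμ hasEigenvalue
    obtain ⟨y, hy, hy0⟩ := hasEigenvalue.exists_hasEigenvector
    exact hy0 (Subtype.ext (eq_zero_of_lie_eq_smul hfin hdom hd
      (mem_derivations_of_mem_leadingModes y.2) hμ
      (congrArg Subtype.val (Module.End.mem_eigenspace_iff.1 hy))))
  · intro y hy
    have lie_lie : ⁅d, ⁅d, (y : Module.End ℂ V)⁆⁆ = 0 := congrArg Subtype.val hy
    exact Subtype.ext (lie_eq_zero_of_commute hfin hdom hd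
      (mem_derivations_of_mem_leadingModes y.2) (sub_eq_zero.1 lie_lie).symm)

theorem derivation_mem_filtration (hfin : W.IsFinite) (hdom : W.IsDomain) {d : Module.End ℂ V}
    (hd : d ∈ W.derivations) {l : ℕ} {b : V} (hb : b ∈ W.filtration l) :
    d b ∈ W.filtration (l + 1) := by
  refine mem_filtration_succ.2 ⟨mem_filtration.2 fun j hj ↦ ?_, ?_⟩
  · rw [P_derivation hd, mem_filtration.1 hb j hj, lie_zero]
  · rw [P_derivation hd, lie_eq_zero_of_mem_leadingModes hfin hdom hd (P_mem_leadingModes hb)]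

theorem exists_eq_smul_D_of_mem_derivations (hfin : W.IsFinite) (hdom : W.IsDomain) {k : ℕ}
    (hk : W.leadingModes k ≠ ⊥) {d : Module.End ℂ V} (hd : d ∈ W.derivations) :
    ∃ s : ℂ, d = s • W.D := by
  obtain ⟨_, hm⟩ := hfin.exists_finrank_leadingModes_le
  obtain ⟨l, hkl, stable⟩ := exists_ge_eq_succ_of_finrank_le leadingModes_mono hm k
  have ne_bot : W.leadingModes l ≠ ⊥ := ne_bot_of_le_ne_bot hk (leadingModes_mono hkl)
  have finite := (hm l).1
  rw [leadingModes_eq_map_D] at ne_bot finite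
  obtain ⟨c, hc, s, hDc, hdc⟩ := exists_apply_eq_smul_apply (g := W.P ((l + 1 : ℕ) : ℤ) ∘ₗ d)
    ne_bot <| by
      rw [← leadingModes_eq_map_D, stable, Submodule.map_comp]
      exact Submodule.map_mono (Submodule.map_le_iff_le_comap.2
        fun _ ↦ derivation_mem_filtration hfin hdom hd)
  rw [LinearMap.comp_apply, P_derivation D_mem_derivations] at hDc
  have hd' : d - s • W.D ∈ W.derivations :=
    sub_mem hd (SMulMemClass.smul_mem s D_mem_derivations)
  refine ⟨s, sub_eq_zero.1 (derivation_eq_zero_of_commute hfin hdom hd' ?_ hDc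
    (sub_eq_zero.1 ?_))⟩
  · rw [← P_derivation D_mem_derivations]
    exact P_mem_derivations (D_mem_filtration hc)
  · rw [← Ring.lie_def, ← P_derivation hd', LinearMap.sub_apply, LinearMap.smul_apply, map_sub,
      map_smul, sub_eq_zero]
    exact hdc

end Filtration

end VertexAlgebra

section Free

theorem nonempty_linearEquiv_polynomial {K M : Type*} [Field K] [AddCommGroup M] [Module K[X] M]
    [Module.Free K[X] M] [Nontrivial M] {a : M}
    (ha : ∀ m, ∃ (β : K) (w : M), m = (C β : K[X]) • a + (X : K[X]) • w) :
    Nonempty (M ≃ₗ[K[X]] K[X]) := by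
  let b := Module.Free.chooseBasis K[X] M
  have eval_coord (m : M) : ∃ β : K, ∀ j, (b.coord j m).eval 0 = β * (b.coord j a).eval 0 := by
    obtain ⟨β, w, rfl⟩ := ha m
    exact ⟨β, fun j ↦ by simp⟩
  have : Subsingleton (Module.Free.ChooseBasisIndex K[X] M) := by
    refine ⟨fun i j ↦ by_contra fun hij ↦ ?_⟩
    obtain ⟨β, hβ⟩ := eval_coord (b i)
    obtain ⟨γ, hγ⟩ := eval_coord (b j)
    have hii := hβ i
    have hji := hβ j
    have hjj := hγ j
    simp only [Module.Basis.coord_apply, Module.Basis.repr_self, Finsupp.single_eq_same, eval_one,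
      Finsupp.single_eq_of_ne' hij, eval_zero] at hii hji hjj
    rcases mul_eq_zero.1 hji.symm with h | h <;> simp [h] at hii hjj
  obtain ⟨i⟩ := b.index_nonempty
  exact ⟨b.repr ≪≫ₗ Finsupp.uniqueLinearEquiv K[X] K[X] i⟩

end Free

namespace VertexAlgebra

/-! ### Rank one -/

section RankOne

variable {V : Type*} [AddCommGroup V] [Module ℂ V] {W : VertexAlgebra V}

theorem exists_P_eq_P_swap_add_D_D (n : ℤ) (a b : V) : ∃ w, W.P n a b =
    (-1 : ℂ) ^ (n + 1) • W.P n b a - (-1 : ℂ) ^ (n + 1) • W.D (W.P (n + 1) b a)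
      + W.D (W.D w) := by
  obtain ⟨N, hN⟩ := W.exists_forall_P_add_eq_zero n b a
  refine ⟨∑ j ∈ range N, ((-1 : ℂ) ^ (n + (j + 2 : ℕ) + 1) / ((j + 2).factorial : ℂ)) •
    (W.D ^ j) (W.P (n + (j + 2 : ℕ)) b a), ?_⟩
  rw [skew_eq_sum_range (N := N + 2) fun j hj ↦ hN j (by lia), sum_range_succ', sum_range_succ',
    map_sum, map_sum, add_assoc, add_comm]
  congr 1
  · simp only [zero_add, Nat.cast_one, ne_eq, neg_eq_zero, one_ne_zero, not_false_eq_true,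
      zpow_add₀, zpow_ofNat, pow_one, mul_neg, mul_one, neg_neg, Nat.factorial_one, div_one,
      CharP.cast_eq_zero, add_zero, Nat.factorial_zero, pow_zero, Module.End.one_apply, neg_smul,
      sub_neg_eq_add]
    abel
  · refine sum_congr rfl fun j _ ↦ ?_
    rw [map_smul, map_smul, pow_succ', pow_succ']
    rfl

theorem exists_eq_smul_vac_add_smul_add_D (hfin : W.IsFinite) (hdom : W.IsDomain) {n : ℕ}
    (hn : W.filtration n = ⊤) (hder : ∀ d ∈ W.derivations, ∃ s : ℂ, d = s • W.D) {a : V}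
    (ha : W.P n a = W.D) (x : V) : ∃ (α β : ℂ) (w : V), x = α • W.vac + β • a + W.D w := by
  have mem_filtration_n (y : V) : y ∈ W.filtration n := hn ▸ Submodule.mem_top
  obtain ⟨β, hβ⟩ := hder _ (P_mem_derivations (mem_filtration_n x))
  obtain ⟨b, rfl⟩ : ∃ b, x = b + β • a := ⟨x - β • a, (sub_add_cancel _ _).symm⟩
  have hPb : W.P n b = 0 := by rwa [map_add, map_smul, ha, add_eq_right] at hβ
  obtain ⟨s, hs⟩ := hder _ (P_mem_derivations (mem_filtration_succ.2 ⟨mem_filtration_n b, hPb⟩))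
  obtain ⟨w, hw⟩ := W.exists_P_eq_P_swap_add_D_D n a b
  rw [ha, hPb, ← Nat.cast_succ, hs, LinearMap.zero_apply, smul_zero, zero_sub,
    LinearMap.smul_apply] at hw
  set w' := w - ((-1 : ℂ) ^ (n.succ : ℤ) * s) • a with w'_def
  have hD : W.D (b - W.D w') = 0 := by
    simp only [w'_def, map_sub, hw, map_smul]
    module
  obtain ⟨α, hα⟩ := exists_eq_smul_vac_of_D_eq_zero hfin hdom hD
  refine ⟨α, β, w', ?_⟩
  rw [← hα]
  abel

variable (W) in
/-- `co` identifies `V` modulo the vacuum with the free `ℂ[T]`-module on the class of `g`. -/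
structure IsCoordinate (g : V) (co : V →ₗ[ℂ] ℂ[X]) : Prop where
  map_gen : co g = 1
  map_D : ∀ v, co (W.D v) = X * co v
  eq_smul_vac : ∀ v, co v = 0 → ∃ α : ℂ, v = α • W.vac

theorem exists_isCoordinate (hfin : W.IsFinite) (hdom : W.IsDomain) (hD : W.D ≠ 0) {a : V}
    (ha : ∀ x : V, ∃ (α β : ℂ) (w : V), x = α • W.vac + β • a + W.D w) :
    ∃ g co, W.IsCoordinate g co := by
  have := hfin.module_finite
  let N := Submodule.torsion ℂ[X] (Module.AEval' W.D)
  let π : V →ₗ[ℂ] Module.AEval' W.D ⧸ N :=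
    N.mkQ.restrictScalars ℂ ∘ₗ (Module.AEval'.of W.D).toLinearMap
  have π_surjective : Function.Surjective π :=
    N.mkQ_surjective.comp (Module.AEval'.of W.D).surjective
  have π_D (v : V) : π (W.D v) = (X : ℂ[X]) • π v :=
    congrArg N.mkQ (Module.AEval'.X_smul_of W.D v).symm
  have π_eq_zero {v : V} (hv : π v = 0) : W.D v = 0 := by
    obtain ⟨⟨p, hp⟩, hpv⟩ :=
      (Submodule.mem_torsion_iff _).1 ((Submodule.Quotient.mk_eq_zero N).1 hv)
    exact derivation_apply_eq_zero_of_aeval_apply_eq_zero hfin hdom D_mem_derivations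
      (nonZeroDivisors.ne_zero hp) ((Module.AEval'.of W.D).injective hpv)
  have π_vac : π W.vac = 0 :=
    (smul_eq_zero.1 ((π_D W.vac).symm.trans (by rw [W.D_vac, map_zero]))).resolve_left X_ne_zero
  have : Nontrivial (Module.AEval' W.D ⧸ N) := by
    obtain ⟨v, hv⟩ := DFunLike.ne_iff.1 hD
    exact ⟨π v, 0, fun h ↦ hv (π_eq_zero h)⟩
  have : Module.Free ℂ[X] (Module.AEval' W.D ⧸ N) := Module.free_of_finite_type_torsion_free'
  obtain ⟨e⟩ := nonempty_linearEquiv_polynomial (a := π a) fun m ↦ by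
    obtain ⟨v, rfl⟩ := π_surjective m
    obtain ⟨α, β, w, rfl⟩ := ha v
    exact ⟨β, π w, by rw [map_add, map_add, map_smul, map_smul, π_vac, π_D, smul_zero, zero_add,
      ← algebraMap_smul ℂ[X] β (π a), algebraMap_eq]⟩
  obtain ⟨g, hg⟩ := π_surjective (e.symm 1)
  refine ⟨g, e.toLinearMap.restrictScalars ℂ ∘ₗ π, ?_, ?_, ?_⟩
  · exact (congrArg e hg).trans (e.apply_symm_apply 1)
  · exact fun v ↦ (congrArg e (π_D v)).trans (map_smul e _ _)
  · exact fun v hv ↦ exists_eq_smul_vac_of_D_eq_zero hfin hdom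
      (π_eq_zero (e.map_eq_zero_iff.1 hv))

theorem exists_filtration_eq_top_and_leadingModes_ne_bot (h : ∃ j : ℕ, W.P j ≠ 0) :
    ∃ n, W.filtration n = ⊤ ∧ W.leadingModes n ≠ ⊥ := by
  classical
  have filtration_eq_top : W.filtration (Nat.find h) = ⊤ := eq_top_iff.2 fun b _ ↦
    mem_filtration.2 fun j hj ↦ by rw [not_not.1 (Nat.find_min h hj), LinearMap.zero_apply]
  refine ⟨Nat.find h, filtration_eq_top, ?_⟩
  rw [leadingModes, filtration_eq_top, Submodule.map_top, ne_eq, LinearMap.range_eq_bot]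
  exact Nat.find_spec h

theorem exists_isCoordinate_of_exists_P_ne_zero (hfin : W.IsFinite) (hdom : W.IsDomain)
    (h : ∃ j : ℕ, W.P j ≠ 0) :
    (∀ d ∈ W.derivations, ∃ s : ℂ, d = s • W.D) ∧ (∃ (n : ℕ) (x : V), W.P n x = W.D) ∧
      ∃ g co, W.IsCoordinate g co := by
  obtain ⟨n, hn, hn'⟩ := exists_filtration_eq_top_and_leadingModes_ne_bot h
  have hder (d : Module.End ℂ V) (hd : d ∈ W.derivations) : ∃ s : ℂ, d = s • W.D :=
    exists_eq_smul_D_of_mem_derivations hfin hdom hn' hd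
  obtain ⟨_, ⟨x, hx, rfl⟩, hx0⟩ := Submodule.exists_mem_ne_zero_of_ne_bot hn'
  obtain ⟨c, hc⟩ := hder _ (P_mem_derivations hx)
  have hcD : c • W.D ≠ 0 := hc ▸ hx0
  have hc0 : c ≠ 0 := left_ne_zero_of_smul hcD
  have hPx : W.P n (c⁻¹ • x) = W.D := by rw [map_smul, hc, inv_smul_smul₀ hc0]
  exact ⟨hder, ⟨n, _, hPx⟩, exists_isCoordinate hfin hdom (right_ne_zero_of_smul hcD)
    (exists_eq_smul_vac_add_smul_add_D hfin hdom hn hder hPx)⟩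

end RankOne

end VertexAlgebra

section ExponentialSums

variable {E : Type*} [AddCommGroup E]

theorem sum_range_sum_range_eq_sum_antidiagonal {N : ℕ} {f : ℕ → ℕ → E}
    (hf : ∀ j k, N ≤ j + k → f j k = 0) :
    ∑ j ∈ range N, ∑ k ∈ range N, f j k = ∑ M ∈ range N, ∑ p ∈ antidiagonal M, f p.1 p.2 := by
  simp only [Nat.sum_antidiagonal_eq_sum_range_succ f]
  rw [sum_range_diag_flip]
  refine sum_congr rfl fun j _ ↦ (sum_subset (range_mono (Nat.sub_le N j)) fun k _ hk ↦ ?_).symm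
  exact hf j k (by simpa [add_comm] using hk)

theorem pow_div_factorial_mul_choose {K : Type*} [Field K] [CharZero K] (s t : K) (p : ℕ × ℕ) :
    s ^ p.1 * t ^ p.2 / ((p.1 + p.2).factorial : K) * (p.1 + p.2).choose p.1 =
      s ^ p.1 / p.1.factorial * (t ^ p.2 / p.2.factorial) := by
  rw [Nat.cast_add_choose]
  have (n : ℕ) : (n.factorial : K) ≠ 0 := Nat.cast_ne_zero.2 n.factorial_ne_zero
  field_simp [this]

theorem sum_range_pow_div_factorial_smul_add {K : Type*} [Field K] [CharZero K] [Module K E]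
    {N : ℕ} {x : ℕ → E} (hx : ∀ M, N ≤ M → x M = 0) (s t : K) :
    ∑ j ∈ range N, ∑ k ∈ range N, (s ^ j / j.factorial * (t ^ k / k.factorial)) • x (j + k) =
      ∑ M ∈ range N, ((s + t) ^ M / M.factorial) • x M := by
  rw [sum_range_sum_range_eq_sum_antidiagonal fun j k h ↦ by rw [hx _ h, smul_zero]]
  refine sum_congr rfl fun M _ ↦ ?_
  rw [(Commute.all s t).add_pow', sum_div, sum_smul]
  refine sum_congr rfl fun p hp ↦ ?_
  rw [HasAntidiagonal.mem_antidiagonal] at hp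
  subst hp
  rw [← pow_div_factorial_mul_choose, nsmul_eq_mul]
  ring_nf

theorem exists_forall_ge_forall_eq_zero {f : ℕ → ℕ → E} (h : ∃ N, ∀ i, N ≤ i → ∀ M, f i M = 0)
    (h' : ∀ i, ∃ N, ∀ M, N ≤ M → f i M = 0) : ∃ N, ∀ M, N ≤ M → ∀ i, f i M = 0 := by
  obtain ⟨N, hN⟩ := h
  choose N' hN' using h'
  refine ⟨(range N).sup N', fun M hM i ↦ ?_⟩
  by_cases hi : i < N
  · exact hN' i M ((le_sup (mem_range.2 hi)).trans hM)
  · exact hN i (not_lt.1 hi) M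

end ExponentialSums

namespace VertexAlgebra

/-! ### The `λ`-bracket -/

section LambdaBracket

variable {V : Type*} [AddCommGroup V] [Module ℂ V] {W : VertexAlgebra V}

theorem lambdaSummand_support_finite (t : ℂ) (a b : V) :
    (Function.support fun k : ℕ ↦ (t ^ k / k.factorial) • W.P k a b).Finite := by
  obtain ⟨N, hN⟩ := W.field_ax a b
  exact (finite_toSet (range N)).subset fun k hk ↦ by
    by_contra hkN
    exact hk (by simp [hN k (by simpa using hkN)])

variable (W) in
/-- The `λ`-bracket `[a_λ b] = ∑ₖ (λᵏ / k!) a₍ₖ₎ b`, evaluated at a complex number `t = λ`. -/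
noncomputable def lambdaBracket (t : ℂ) : V →ₗ[ℂ] V →ₗ[ℂ] V :=
  LinearMap.mk₂ ℂ (fun a b ↦ ∑ᶠ k : ℕ, (t ^ k / k.factorial) • W.P k a b)
    (fun a a' b ↦ by
      simp only [map_add, LinearMap.add_apply, smul_add]
      exact finsum_add_distrib (lambdaSummand_support_finite t a b)
        (lambdaSummand_support_finite t a' b))
    (fun c a b ↦ by
      simp only [map_smul, LinearMap.smul_apply, smul_finsum, smul_comm c])
    (fun a b b' ↦ by
      simp only [map_add, smul_add]
      exact finsum_add_distrib (lambdaSummand_support_finite t a b)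
        (lambdaSummand_support_finite t a b'))
    (fun c a b ↦ by
      simp only [map_smul, smul_finsum, smul_comm c])

theorem lambdaBracket_eq_sum_range {a b : V} {N : ℕ} (h : ∀ k : ℕ, N ≤ k → W.P k a b = 0)
    (t : ℂ) : W.lambdaBracket t a b = ∑ k ∈ range N, (t ^ k / k.factorial) • W.P k a b :=
  finsum_eq_sum_range fun k hk ↦ by rw [h k hk, smul_zero]

theorem lambdaBracket_D_left (t : ℂ) (a b : V) :
    W.lambdaBracket t (W.D a) b = -t • W.lambdaBracket t a b := by
  obtain ⟨N, hN⟩ := W.field_ax a b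
  have hND (k : ℕ) (hk : N + 1 ≤ k) : W.P k (W.D a) b = 0 := by
    obtain ⟨k, rfl⟩ := Nat.exists_eq_add_of_le' (Nat.one_le_of_lt hk)
    rw [P_succ_D, LinearMap.smul_apply, hN k (by lia), smul_zero]
  rw [lambdaBracket_eq_sum_range hND, lambdaBracket_eq_sum_range hN, sum_range_succ', P_D]
  simp only [CharP.cast_eq_zero, Int.cast_zero, neg_zero, zero_smul, LinearMap.zero_apply,
    smul_zero, add_zero, smul_sum]
  refine sum_congr rfl fun k _ ↦ ?_
  have := k.cast_add_one_ne_zero (R := ℂ)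
  rw [P_succ_D, LinearMap.smul_apply, smul_smul, smul_smul, Nat.factorial_succ]
  congr 1
  push_cast
  field_simp
  ring

theorem lambdaBracket_D_right (t : ℂ) (a b : V) :
    W.lambdaBracket t a (W.D b) = W.D (W.lambdaBracket t a b) + t • W.lambdaBracket t a b := by
  obtain ⟨N₁, hN₁⟩ := W.field_ax a b
  obtain ⟨N₂, hN₂⟩ := W.field_ax a (W.D b)
  have D_lambdaBracket :
      W.D (W.lambdaBracket t a b) = W.lambdaBracket t (W.D a) b + W.lambdaBracket t a (W.D b) := by
    have hN {k : ℕ} (hk : max N₁ N₂ ≤ k) : W.P k a b = 0 ∧ W.P k a (W.D b) = 0 :=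
      ⟨hN₁ k (le_of_max_le_left hk), hN₂ k (le_of_max_le_right hk)⟩
    rw [lambdaBracket_eq_sum_range (fun k hk ↦ (hN hk).1),
      lambdaBracket_eq_sum_range (fun k hk ↦ (hN hk).2),
      lambdaBracket_eq_sum_range (N := max N₁ N₂) (a := W.D a) fun k hk ↦ by
        rw [← add_sub_cancel_right (W.P k (W.D a) b) (W.P k a (W.D b)), ← W.D_deriv, (hN hk).1,
          (hN hk).2, map_zero, sub_zero], map_sum, ← sum_add_distrib]
    exact sum_congr rfl fun k _ ↦ by rw [map_smul, W.D_deriv, smul_add]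
  rw [D_lambdaBracket, lambdaBracket_D_left]
  module

theorem lambdaBracket_vac_left (t : ℂ) (b : V) : W.lambdaBracket t W.vac b = 0 := by
  rw [lambdaBracket_eq_sum_range (N := 0) fun k _ ↦ by rw [W.vac_field, if_neg (by lia)]]
  rfl

theorem lambdaBracket_vac_right (t : ℂ) (a : V) : W.lambdaBracket t a W.vac = 0 := by
  rw [lambdaBracket_eq_sum_range (N := 0) fun k _ ↦ W.creation_pos a k (Int.natCast_nonneg k)]
  rfl

theorem exists_polynomial_eval_eq_lambdaBracket (φ : V →ₗ[ℂ] ℂ) (a b : V) : ∃ r : ℂ[X],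
    (∀ k : ℕ, r.coeff k = φ (W.P k a b) / k.factorial) ∧
      ∀ t, r.eval t = φ (W.lambdaBracket t a b) := by
  obtain ⟨N, hN⟩ := W.field_ax a b
  refine ⟨∑ k ∈ range N, monomial k (φ (W.P k a b) / k.factorial), fun k ↦ ?_, fun t ↦ ?_⟩
  · simp only [finsetSum_coeff, coeff_monomial, sum_ite_eq', mem_range]
    split_ifs with hk
    · rfl
    · rw [hN k (not_lt.1 hk), map_zero, zero_div]
  · simp only [lambdaBracket_eq_sum_range hN, map_sum, map_smul, eval_finsetSum, eval_monomial,
      smul_eq_mul]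
    exact sum_congr rfl fun k _ ↦ by ring

theorem map_lambdaBracket_swap {φ : V →ₗ[ℂ] ℂ} {s : ℂ} (hφ : ∀ v, φ (W.D v) = s * φ v)
    (t : ℂ) (a b : V) : φ (W.lambdaBracket t a b) = -φ (W.lambdaBracket (-t - s) b a) := by
  obtain ⟨N, hN⟩ := W.field_ax b a
  have map_D_pow (j : ℕ) (v : V) : φ ((W.D ^ j) v) = s ^ j * φ v := by
    induction j with
    | zero => simp
    | succ j ih => rw [pow_succ', Module.End.mul_apply, hφ, ih, pow_succ', mul_assoc]
  have skew (n : ℕ) : W.P n a b = ∑ j ∈ range N, ((-1) ^ (n + j + 1) / j.factorial : ℂ) •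
      (W.D ^ j) (W.P (n + j : ℕ) b a) := by
    have := skew_eq_sum_range (W := W) (n := n) (a := a) (b := b) (N := N) fun j hj ↦
      mod_cast hN (n + j) (by lia)
    exact_mod_cast this
  have hN' (n : ℕ) (hn : N ≤ n) : W.P n a b = 0 := by
    rw [skew]
    exact sum_eq_zero fun j _ ↦ by rw [hN _ (by lia), map_zero, smul_zero]
  rw [lambdaBracket_eq_sum_range hN, lambdaBracket_eq_sum_range hN', sub_eq_add_neg,
    ← sum_range_pow_div_factorial_smul_add hN]
  simp only [skew, map_sum, map_smul, map_D_pow, smul_eq_mul, mul_sum, ← sum_neg_distrib]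
  refine sum_congr rfl fun n _ ↦ sum_congr rfl fun j _ ↦ ?_
  rw [neg_pow t, neg_pow s]
  ring

theorem exists_forall_lambdaBracket_lambdaBracket_eq (a b c : V) :
    ∃ N₀, ∀ N, N₀ ≤ N → ∀ s t, W.lambdaBracket s a (W.lambdaBracket t b c) =
      ∑ m ∈ range N, ∑ k ∈ range N, (s ^ m / m.factorial * (t ^ k / k.factorial)) •
        W.P m a (W.P k b c) := by
  obtain ⟨N₁, hN₁⟩ := W.field_ax b c
  obtain ⟨N₂, hN₂⟩ := exists_forall_ge_forall_eq_zero (f := fun k m ↦ W.P m a (W.P k b c))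
    ⟨N₁, fun k hk m ↦ by rw [hN₁ k hk, map_zero]⟩ fun k ↦ W.field_ax a (W.P k b c)
  refine ⟨max N₁ N₂, fun N hN s t ↦ ?_⟩
  rw [lambdaBracket_eq_sum_range (N := N) (a := b) fun k hk ↦ hN₁ k (by lia), map_sum, sum_comm]
  refine sum_congr rfl fun k _ ↦ ?_
  rw [map_smul, lambdaBracket_eq_sum_range (N := N) fun m hm ↦ hN₂ m (by lia) k, smul_sum]
  exact sum_congr rfl fun m _ ↦ by rw [smul_smul, mul_comm]

theorem sum_range_smul_commutator_eq (s t : ℂ) {a b c : V} {N₁ N₂ N : ℕ}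
    (h₁ : ∀ i : ℕ, N₁ ≤ i → W.P i a b = 0)
    (h₂ : ∀ M : ℕ, N₂ ≤ M → ∀ i : ℕ, W.P M (W.P i a b) c = 0) (hN : N₁ + N₂ ≤ N) :
    ∑ m ∈ range N, ∑ k ∈ range N, (s ^ m / m.factorial * (t ^ k / k.factorial)) •
      (W.P m a (W.P k b c) - W.P k b (W.P m a c)) =
    W.lambdaBracket (s + t) (W.lambdaBracket s a b) c := by
  let F (i j : ℕ) : V := ∑ k ∈ range N, (s ^ i / i.factorial * (s ^ j / j.factorial) *
    (t ^ k / k.factorial)) • W.P (j + k : ℕ) (W.P i a b) c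
  have hF (i j : ℕ) (hij : N ≤ i + j) : F i j = 0 := by
    refine sum_eq_zero fun k _ ↦ ?_
    by_cases hi : N₁ ≤ i
    · rw [h₁ i hi, map_zero, LinearMap.zero_apply, smul_zero]
    · rw [h₂ _ (by lia), smul_zero]
  calc _ = ∑ m ∈ range N, ∑ p ∈ antidiagonal m, F p.1 p.2 := by
        refine sum_congr rfl fun m _ ↦ ?_
        simp only [commutator_eq_sum_antidiagonal, smul_sum]
        rw [sum_comm]
        refine sum_congr rfl fun p hp ↦ sum_congr rfl fun k _ ↦ ?_
        rw [HasAntidiagonal.mem_antidiagonal] at hp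
        subst hp
        rw [← pow_div_factorial_mul_choose, ← Nat.cast_smul_eq_nsmul ℂ, smul_smul, Nat.cast_add p.2]
        congr 1
        ring
    _ = ∑ i ∈ range N, ∑ j ∈ range N, F i j :=
        (sum_range_sum_range_eq_sum_antidiagonal hF).symm
    _ = _ := by
        rw [lambdaBracket_eq_sum_range (N := N) (a := a) fun i hi ↦ h₁ i (by lia), map_sum,
          LinearMap.sum_apply]
        refine sum_congr rfl fun i _ ↦ ?_
        rw [map_smul, LinearMap.smul_apply,
          lambdaBracket_eq_sum_range (N := N) fun M hM ↦ h₂ M (by lia) i,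
          ← sum_range_pow_div_factorial_smul_add fun M hM ↦ h₂ M (by lia) i]
        simp only [F, smul_sum, smul_smul, mul_assoc]

theorem lambdaBracket_jacobi (s t : ℂ) (a b c : V) :
    W.lambdaBracket s a (W.lambdaBracket t b c) - W.lambdaBracket t b (W.lambdaBracket s a c) =
      W.lambdaBracket (s + t) (W.lambdaBracket s a b) c := by
  obtain ⟨N₁, hN₁⟩ := W.field_ax a b
  obtain ⟨N₂, hN₂⟩ := exists_forall_ge_forall_eq_zero (f := fun i M ↦ W.P M (W.P i a b) c)
    ⟨N₁, fun i hi M ↦ by rw [hN₁ i hi, map_zero, LinearMap.zero_apply]⟩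
    fun i ↦ W.field_ax (W.P i a b) c
  obtain ⟨N₃, hN₃⟩ := exists_forall_lambdaBracket_lambdaBracket_eq (W := W) a b c
  obtain ⟨N₄, hN₄⟩ := exists_forall_lambdaBracket_lambdaBracket_eq (W := W) b a c
  set N := N₁ + N₂ + N₃ + N₄
  rw [hN₃ N (by lia), hN₄ N (by lia), sum_comm (s := range N) (t := range N) (f := fun k m ↦
      (t ^ k / k.factorial * (s ^ m / m.factorial)) • W.P k b (W.P m a c)), ← sum_sub_distrib,
    ← sum_range_smul_commutator_eq s t hN₁ hN₂ (N := N) (by lia)]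
  refine sum_congr rfl fun m _ ↦ ?_
  rw [← sum_sub_distrib]
  exact sum_congr rfl fun k _ ↦ by rw [smul_sub, mul_comm (t ^ k / _)]

end LambdaBracket

end VertexAlgebra

/-! ### Rank one Lie conformal algebras -/

theorem map_aeval_apply_eq_eval_smul {K M E : Type*} [CommRing K] [AddCommGroup M] [Module K M]
    [AddCommGroup E] [Module K E] {f : Module.End K M} {φ : M →ₗ[K] E} {s : K}
    (hφ : ∀ v, φ (f v) = s • φ v) (p : K[X]) (v : M) : φ (aeval f p v) = p.eval s • φ v := by
  induction p using Polynomial.induction_on' with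
  | add p q hp hq => simp only [map_add, LinearMap.add_apply, hp, hq, eval_add, add_smul]
  | monomial n c =>
    induction n with
    | zero => simp
    | succ n ih =>
      rw [← X_mul_monomial, map_mul, aeval_X, Module.End.mul_apply, hφ, ih, eval_mul, eval_X,
        mul_smul]

section PolynomialShift

theorem coeff_taylor_of_natDegree_le {R : Type*} [CommRing R] {p : R[X]} {m : ℕ}
    (hp : p.natDegree ≤ m + 1) (t : R) :
    (taylor t p).coeff m = p.coeff m + (m + 1) * t * p.coeff (m + 1) := by
  rw [taylor_coeff, eq_X_add_C_of_natDegree_le_one ((natDegree_hasseDeriv_le p m).trans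
    (Nat.sub_le_iff_le_add'.2 hp))]
  simp only [hasseDeriv_coeff, eval_add, eval_mul, eval_C, eval_X, zero_add, Nat.choose_self,
    Nat.cast_one, one_mul, add_comm 1 m, Nat.choose_succ_self_right, Nat.cast_add]
  ring

theorem natDegree_taylor_sub_le {R : Type*} [CommRing R] {p : R[X]} {m : ℕ}
    (hp : p.natDegree ≤ m + 1) (t : R) : (taylor t p - p).natDegree ≤ m := by
  refine natDegree_le_iff_coeff_eq_zero.2 fun N hN ↦ ?_
  rw [coeff_sub, coeff_taylor_of_natDegree_le (hp.trans (by lia)),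
    coeff_eq_zero_of_natDegree_lt (n := N + 1) (by lia)]
  ring

theorem coeff_taylor_mul_sub {R : Type*} [CommRing R] {p q : R[X]} {m : ℕ}
    (hp : p.natDegree ≤ m + 1) (hq : q.natDegree ≤ m + 1) (s t : R) :
    (taylor s q * p - taylor t p * q).coeff (m + (m + 1)) =
      (m + 1) * (s - t) * (p.coeff (m + 1) * q.coeff (m + 1)) := by
  have : taylor s q * p - taylor t p * q = (taylor s q - q) * p - (taylor t p - p) * q := by ring
  rw [this, coeff_sub, coeff_mul_add_eq_of_natDegree_le (natDegree_taylor_sub_le hq s) hp,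
    coeff_mul_add_eq_of_natDegree_le (natDegree_taylor_sub_le hp t) hq, coeff_sub, coeff_sub,
    coeff_taylor_of_natDegree_le hp, coeff_taylor_of_natDegree_le hq]
  ring

end PolynomialShift

/-- `q t = [g_t g] / g` for a generator `g` of a free Lie conformal algebra of rank one, with the
indeterminate standing for the translation operator. -/
structure IsRankOneBracket {K : Type*} [Field K] (q : K → K[X]) : Prop where
  exists_natDegree_le : ∃ N, ∀ t, (q t).natDegree ≤ N
  exists_eval_eq_coeff : ∀ m, ∃ r : K[X], ∀ t, r.eval t = (q t).coeff m
  skew : ∀ s t, (q t).eval s = -(q (-t - s)).eval s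
  jacobi : ∀ s t,
    taylor s (q t) * q s - taylor t (q s) * q t = C ((q s).eval (-(s + t))) * q (s + t)

namespace IsRankOneBracket

variable {K : Type*} [Field K] {q : K → K[X]}

theorem natDegree_le_of_natDegree_le_succ [CharZero K] (hq : IsRankOneBracket q) {m : ℕ}
    (h : ∀ t, (q t).natDegree ≤ m + 2) (t : K) : (q t).natDegree ≤ m + 1 := by
  obtain ⟨A, hA⟩ := hq.exists_eval_eq_coeff (m + 2)
  have mul_eq_zero_of_ne {s t : K} (hst : s ≠ t) : A.eval s * A.eval t = 0 := by
    have hcoeff := congrArg (coeff · (m + 1 + (m + 2))) (hq.jacobi s t)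
    simp only [coeff_C_mul, coeff_taylor_mul_sub (h s) (h t),
      coeff_eq_zero_of_natDegree_lt ((h (s + t)).trans_lt (by lia : _ < m + 1 + (m + 2))),
      mul_zero] at hcoeff
    rw [hA, hA]
    refine (mul_eq_zero.1 hcoeff).resolve_left (mul_ne_zero ?_ (sub_ne_zero.2 hst))
    exact_mod_cast (m + 1).succ_ne_zero
  have hA0 : A = 0 := Polynomial.funext fun s ↦ by
    rw [eval_zero]
    by_contra hs
    have isRoot (t : K) (hst : s ≠ t) : A.IsRoot t :=
      (mul_eq_zero.1 (mul_eq_zero_of_ne hst)).resolve_left hs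
    refine hs (by rw [eq_zero_of_infinite_isRoot A
      ((Set.finite_singleton s).infinite_compl.mono fun t ht ↦ isRoot t (Ne.symm ht)), eval_zero])
  refine natDegree_le_iff_coeff_eq_zero.2 fun N hN ↦ ?_
  obtain rfl | hlt := (Nat.succ_le_of_lt hN).eq_or_lt
  · exact (hA t).symm.trans (by rw [hA0, eval_zero])
  · exact coeff_eq_zero_of_natDegree_lt ((h t).trans_lt hlt)

theorem natDegree_le_one [CharZero K] (hq : IsRankOneBracket q) (t : K) :
    (q t).natDegree ≤ 1 := by
  obtain ⟨N, hN⟩ := hq.exists_natDegree_le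
  replace hN (t : K) : (q t).natDegree ≤ N + 1 := (hN t).trans N.le_succ
  induction N generalizing t with
  | zero => exact hN t
  | succ N ih => exact ih t (hq.natDegree_le_of_natDegree_le_succ hN)

theorem exists_eq_C_mul_X_add_C [CharZero K] (hq : IsRankOneBracket q) :
    ∃ A : K, ∀ t, q t = C A * (X + C (2 * t)) := by
  have eval_eq (s t : K) : (q t).eval s = (q t).coeff 1 * (s + 2 * t) := by
    have eval_eq' (s : K) : (q t).eval s = (q t).coeff 1 * s + (q t).coeff 0 := by
      conv_lhs => rw [eq_X_add_C_of_natDegree_le_one (hq.natDegree_le_one t)]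
      simp only [eval_add, eval_mul, eval_C, eval_X]
    have skew_fixed : (q t).eval (-(2 * t)) = 0 := by
      have h := hq.skew (-(2 * t)) t
      rw [show -t - -(2 * t) = t by ring] at h
      exact self_eq_neg.1 h
    rw [eval_eq'] at skew_fixed ⊢
    linear_combination skew_fixed
  have coeff_one_eq (t : K) : (q t).coeff 1 = (q 0).coeff 1 := by
    by_cases ht : t = 0
    · rw [ht]
    have h := hq.skew (-t) t
    rw [show -t - -t = 0 by ring, eval_eq, eval_eq] at h
    exact mul_right_cancel₀ ht (by linear_combination h)
  refine ⟨(q 0).coeff 1, fun t ↦ Polynomial.funext fun s ↦ ?_⟩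
  simp only [eval_eq, coeff_one_eq t, eval_mul, eval_C, eval_add, eval_X]

end IsRankOneBracket

namespace VertexAlgebra

section Coordinate

variable {V : Type*} [AddCommGroup V] [Module ℂ V] {W : VertexAlgebra V} {g : V}
  {co : V →ₗ[ℂ] ℂ[X]}

theorem IsCoordinate.eval_map_D (hco : W.IsCoordinate g co) (s : ℂ) (v : V) :
    (leval s ∘ₗ co) (W.D v) = s • (leval s ∘ₗ co) v := by
  simp only [LinearMap.comp_apply, leval_apply, hco.map_D, eval_mul, eval_X, smul_eq_mul]

theorem IsCoordinate.map_aeval_D (hco : W.IsCoordinate g co) (p : ℂ[X]) (v : V) :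
    co (aeval W.D p v) = p * co v :=
  Polynomial.funext fun s ↦ by
    simpa using map_aeval_apply_eq_eval_smul (hco.eval_map_D s) p v

theorem IsCoordinate.map_D_pow (hco : W.IsCoordinate g co) (m : ℕ) (v : V) :
    co ((W.D ^ m) v) = X ^ m * co v := by
  simpa using hco.map_aeval_D (X ^ m) v

theorem IsCoordinate.map_vac (hco : W.IsCoordinate g co) : co W.vac = 0 := by
  have h := hco.map_D W.vac
  rw [W.D_vac, map_zero, eq_comm] at h
  exact (mul_eq_zero.1 h).resolve_left X_ne_zero

theorem IsCoordinate.exists_eq_add_smul_vac (hco : W.IsCoordinate g co) {u v : V}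
    (h : co u = co v) : ∃ α : ℂ, u = v + α • W.vac := by
  obtain ⟨α, hα⟩ := hco.eq_smul_vac (u - v) (by rw [map_sub, h, sub_self])
  exact ⟨α, by rw [← hα, add_sub_cancel]⟩

theorem IsCoordinate.exists_eq_aeval_D_add_smul_vac (hco : W.IsCoordinate g co) (v : V) :
    ∃ α : ℂ, v = aeval W.D (co v) g + α • W.vac :=
  hco.exists_eq_add_smul_vac (by rw [hco.map_aeval_D, hco.map_gen, mul_one])

theorem IsCoordinate.eval_map_lambdaBracket (hco : W.IsCoordinate g co) (s t : ℂ) (u v : V) :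
    (co (W.lambdaBracket t u v)).eval s =
      (co u).eval (-t) * (co v).eval (t + s) * (co (W.lambdaBracket t g g)).eval s := by
  obtain ⟨α, hα⟩ := hco.exists_eq_aeval_D_add_smul_vac u
  obtain ⟨β, hβ⟩ := hco.exists_eq_aeval_D_add_smul_vac v
  have left : W.lambdaBracket t u v = (co u).eval (-t) • W.lambdaBracket t g v := by
    conv_lhs => rw [hα]
    rw [map_add, map_smul, LinearMap.add_apply, LinearMap.smul_apply, lambdaBracket_vac_left,
      smul_zero, add_zero]
    exact map_aeval_apply_eq_eval_smul (φ := (W.lambdaBracket t).flip v)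
      (fun a ↦ lambdaBracket_D_left t a v) _ _
  let φ : V →ₗ[ℂ] ℂ := leval s ∘ₗ co ∘ₗ W.lambdaBracket t g
  have hφ (b : V) : φ (W.D b) = (t + s) • φ b := by
    simp only [φ, LinearMap.comp_apply, leval_apply, lambdaBracket_D_right, map_add, map_smul,
      hco.map_D, eval_mul, eval_X, smul_eq_mul]
    ring
  have right : φ v = (co v).eval (t + s) * φ g := by
    conv_lhs => rw [hβ]
    rw [map_add, map_smul, map_aeval_apply_eq_eval_smul hφ, smul_eq_mul]
    simp only [φ, LinearMap.comp_apply, lambdaBracket_vac_right, map_zero, smul_zero, add_zero]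
  simp only [φ, LinearMap.comp_apply, leval_apply] at right
  rw [left, map_smul, eval_smul, smul_eq_mul, right, mul_assoc]

theorem IsCoordinate.isRankOneBracket (hco : W.IsCoordinate g co) :
    IsRankOneBracket fun t ↦ co (W.lambdaBracket t g g) where
  exists_natDegree_le := by
    obtain ⟨N, hN⟩ := W.field_ax g g
    refine ⟨(range N).sup fun k ↦ (co (W.P k g g)).natDegree, fun t ↦ ?_⟩
    rw [lambdaBracket_eq_sum_range hN, map_sum]
    refine natDegree_sum_le_of_forall_le _ _ fun k hk ↦ ?_
    rw [map_smul]
    exact (natDegree_smul_le _ _).trans (le_sup (f := fun k : ℕ ↦ (co (W.P k g g)).natDegree) hk)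
  exists_eval_eq_coeff m := by
    obtain ⟨r, -, hr⟩ := W.exists_polynomial_eval_eq_lambdaBracket (lcoeff ℂ m ∘ₗ co) g g
    exact ⟨r, hr⟩
  skew s t := map_lambdaBracket_swap (hco.eval_map_D s) t g g
  jacobi s t := Polynomial.funext fun r ↦ by
    have h := congrArg (fun v ↦ (co v).eval r) (W.lambdaBracket_jacobi s t g g g)
    simp only [map_sub, eval_sub] at h
    rw [hco.eval_map_lambdaBracket r s, hco.eval_map_lambdaBracket r t,
      hco.eval_map_lambdaBracket r (s + t) (W.lambdaBracket s g g)] at h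
    simp only [hco.map_gen, eval_one, one_mul, mul_one] at h
    simp only [eval_sub, eval_mul, taylor_eval, eval_C, ← h, add_comm r]

theorem map_P_eq_factorial_mul_coeff {φ : V →ₗ[ℂ] ℂ} {u v : V} {r : ℂ[X]}
    (h : ∀ t, φ (W.lambdaBracket t u v) = r.eval t) (k : ℕ) :
    φ (W.P k u v) = k.factorial * r.coeff k := by
  obtain ⟨r', hcoeff, heval⟩ := W.exists_polynomial_eval_eq_lambdaBracket φ u v
  obtain rfl : r' = r := Polynomial.funext fun t ↦ (heval t).trans (h t)
  rw [hcoeff, mul_div_cancel₀ _ (Nat.cast_ne_zero.2 k.factorial_ne_zero)]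

theorem map_P_eq_of_map_lambdaBracket_eq {u v : V} {A : ℂ}
    (h : ∀ t, co (W.lambdaBracket t u v) = C A * (X + C (2 * t))) :
    co (W.P 0 u v) = C A * X ∧ co (W.P 1 u v) = C A * 2 ∧
      ∀ k : ℕ, 2 ≤ k → co (W.P k u v) = 0 := by
  have eval_map_P (s : ℂ) (k : ℕ) : (co (W.P k u v)).eval s =
      k.factorial * (C (2 * A) * X + C (A * s)).coeff k :=
    map_P_eq_factorial_mul_coeff (φ := leval s ∘ₗ co) (fun t ↦ by
      simp only [LinearMap.comp_apply, leval_apply, h, eval_mul, eval_add, eval_C, eval_X]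
      ring) k
  refine ⟨Polynomial.funext fun s ↦ ?_, Polynomial.funext fun s ↦ ?_,
    fun k hk ↦ Polynomial.funext fun s ↦ ?_⟩
  · simpa using eval_map_P s 0
  · simpa [mul_comm] using eval_map_P s 1
  · rw [eval_map_P, coeff_eq_zero_of_natDegree_lt (natDegree_linear_le.trans_lt hk), mul_zero,
      eval_zero]

theorem IsCoordinate.exists_map_P_eq (hco : W.IsCoordinate g co)
    (h : ∃ (n : ℕ) (x : V), W.P n x = W.D) : ∃ A : ℂ, A ≠ 0 ∧ co (W.P 0 g g) = C A * X ∧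
      co (W.P 1 g g) = C A * 2 ∧ ∀ k : ℕ, 2 ≤ k → co (W.P k g g) = 0 := by
  obtain ⟨A, hA⟩ := hco.isRankOneBracket.exists_eq_C_mul_X_add_C
  refine ⟨A, ?_, map_P_eq_of_map_lambdaBracket_eq hA⟩
  rintro rfl
  obtain ⟨n, x, hx⟩ := h
  have map_lambdaBracket (s t : ℂ) : (leval s ∘ₗ co) (W.lambdaBracket t x g) = eval t 0 := by
    simp [hco.eval_map_lambdaBracket, hA]
  refine X_ne_zero (R := ℂ) (Polynomial.funext fun s ↦ ?_)
  simpa [hx, hco.map_D, hco.map_gen] using map_P_eq_factorial_mul_coeff (map_lambdaBracket s) n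

theorem IsCoordinate.smul_add_smul_vac (hco : W.IsCoordinate g co) {A : ℂ} (hA : A ≠ 0) (α : ℂ) :
    W.IsCoordinate (A⁻¹ • g + α • W.vac) (A • co) where
  map_gen := by
    rw [LinearMap.smul_apply, map_add, map_smul, map_smul, hco.map_gen, hco.map_vac, smul_zero,
      add_zero, smul_inv_smul₀ hA]
  map_D v := by simp only [LinearMap.smul_apply, hco.map_D, mul_smul_comm]
  eq_smul_vac v hv := hco.eq_smul_vac v ((smul_eq_zero.1 hv).resolve_left hA)

theorem P_vac {n : ℤ} (hn : n ≠ -1) : W.P n W.vac = 0 :=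
  LinearMap.ext fun v ↦ by rw [W.vac_field, if_neg hn, LinearMap.zero_apply]

theorem P_smul_add_smul_vac (n : ℕ) (s α : ℂ) (v : V) :
    W.P n (s • v + α • W.vac) (s • v + α • W.vac) = (s * s) • W.P n v v := by
  simp only [map_add, map_smul, LinearMap.smul_apply, P_vac (n := n) (by lia), smul_zero, add_zero,
    W.creation_pos v n (Int.natCast_nonneg n), smul_smul]

variable (W) in
/-- `L` is a conformal vector of central charge `2 * c`: the operators `L_{n-1} = L₍ₙ₎` satisfy
the Virasoro relations, and `L_{-1}` is the translation operator. -/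
structure IsConformalVector (L : V) (c : ℂ) : Prop where
  P_zero : W.P 0 L = W.D
  P_one : W.P 1 L L = (2 : ℂ) • L
  P_three : W.P 3 L L = c • W.vac
  P_eq_zero : ∀ k : ℕ, 2 ≤ k → k ≠ 3 → W.P k L L = 0

theorem P_one_P (hg0 : W.P 0 g = W.D) (hg1 : W.P 1 g g = (2 : ℂ) • g) (k : ℤ) (v : V) :
    W.P 1 g (W.P k g v) = W.P k g (W.P 1 g v) + (1 - k : ℂ) • W.P k g v := by
  have commutator : W.P 1 g (W.P k g v) - W.P k g (W.P 1 g v) =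
      W.P (1 + k) (W.P 0 g g) v + W.P k (W.P 1 g g) v := by
    simpa [Nat.antidiagonal_succ] using W.commutator_eq_sum_antidiagonal 1 k g g v
  rw [hg0, hg1, W.transl_inv, map_smul, LinearMap.smul_apply, add_sub_cancel_left,
    sub_eq_iff_eq_add] at commutator
  rw [commutator]
  push_cast
  module

theorem IsCoordinate.exists_isConformalVector_of_P_one_eq (hco : W.IsCoordinate g co)
    (hg0 : W.P 0 g = W.D) (hg1 : W.P 1 g g = (2 : ℂ) • g)
    (hg : ∀ k : ℕ, 2 ≤ k → co (W.P k g g) = 0) :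
    ∃ c, W.IsConformalVector g c := by
  obtain ⟨c, hc⟩ := hco.eq_smul_vac _ (hg 3 (by lia))
  refine ⟨c, hg0, hg1, mod_cast hc, fun k hk hk3 ↦ ?_⟩
  obtain ⟨α, hα⟩ := hco.eq_smul_vac _ (hg k hk)
  have h := P_one_P hg0 hg1 k g
  rw [hg1, map_smul, hα, map_smul, W.creation_pos g 1 zero_le_one, smul_zero, smul_smul] at h
  have h' : (3 - k : ℂ) • α • W.vac = 0 := by
    rw [h]
    push_cast
    module
  rw [hα]
  exact (smul_eq_zero.1 h').resolve_left (sub_ne_zero.2 (mod_cast hk3.symm))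

theorem IsCoordinate.exists_isConformalVector (hco : W.IsCoordinate g co)
    (hder : ∀ d ∈ W.derivations, ∃ s : ℂ, d = s • W.D)
    (h : ∃ (n : ℕ) (x : V), W.P n x = W.D) :
    ∃ L c co', W.IsCoordinate L co' ∧ W.IsConformalVector L c := by
  obtain ⟨A, hA, h0, h1, hk⟩ := hco.exists_map_P_eq h
  obtain ⟨α, hα⟩ : ∃ α : ℂ, W.P 1 g g = (2 * A) • g + α • W.vac :=
    hco.exists_eq_add_smul_vac (by rw [h1, map_smul, hco.map_gen, smul_eq_C_mul, mul_one, C_mul,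
      C_ofNat, mul_comm])
  have hg0 : W.P 0 g = A • W.D := by
    obtain ⟨s, hs⟩ := hder _ (P_mem_derivations (l := 0) (b := g) (mem_filtration.2 (by simp)))
    rw [Nat.cast_zero] at hs
    rw [hs, LinearMap.smul_apply, map_smul, hco.map_D, hco.map_gen, mul_one, smul_eq_C_mul] at h0
    rw [hs, C_injective (mul_right_cancel₀ X_ne_zero h0)]
  have hL := hco.smul_add_smul_vac hA (α / (2 * A ^ 2))
  set L := A⁻¹ • g + (α / (2 * A ^ 2)) • W.vac with L_def
  have hL0 : W.P 0 L = W.D := by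
    rw [L_def, map_add, map_smul, map_smul, hg0, inv_smul_smul₀ hA, P_vac (by lia), smul_zero,
      add_zero]
  have hLk (k : ℕ) : W.P k L L = (A⁻¹ * A⁻¹) • W.P k g g := P_smul_add_smul_vac k _ _ _
  have hL1 : W.P 1 L L = (2 : ℂ) • L := by
    rw [← Nat.cast_one, hLk, Nat.cast_one, hα, L_def]
    match_scalars <;> field_simp
  have map_P_L (k : ℕ) (hk2 : 2 ≤ k) : (A • co) (W.P k L L) = 0 := by
    rw [hLk, LinearMap.smul_apply, map_smul, hk k hk2, smul_zero, smul_zero]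
  obtain ⟨c, hc⟩ := hL.exists_isConformalVector_of_P_one_eq hL0 hL1 map_P_L
  exact ⟨L, c, _, hL, hc⟩

end Coordinate

/-! ### The Virasoro relations at low weight -/

section ConformalVector

variable {V : Type*} [AddCommGroup V] [Module ℂ V] {W : VertexAlgebra V} {L : V} {c : ℂ}
  {co : V →ₗ[ℂ] ℂ[X]}

theorem P_apply_D (k : ℤ) (a v : V) :
    W.P k a (W.D v) = W.D (W.P k a v) + (k : ℂ) • W.P (k - 1) a v := by
  rw [W.D_deriv, W.transl_inv]
  module

theorem P_neg_three_vac (a : V) : W.P (-3) a W.vac = (1 / 2 : ℂ) • W.D (W.D a) := by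
  have h : (2 : ℂ) • W.P (-3) a W.vac = W.D (W.D a) := by
    conv_rhs => rw [← W.creation (W.D (W.D a)), W.transl_inv, W.transl_inv]
    norm_num
  rw [← h, smul_smul]
  norm_num

theorem IsConformalVector.P_P (hL : W.IsConformalVector L c) (m : ℕ) (k : ℤ) (v : V) :
    W.P m L (W.P k L v) = W.P k L (W.P m L v) + (m - k : ℂ) • W.P (m + k - 1) L v +
      (m.choose 3 * c : ℂ) • W.P (m + k - 3) W.vac v := by
  have commutator := W.commutator_eq_sum_range m k v (a := L) (b := L) (N := 4)
    fun j hj ↦ hL.P_eq_zero j (by lia) (by lia)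
  have P_two : W.P 2 L L = 0 := hL.P_eq_zero 2 le_rfl (by lia)
  simp only [Ring.choose_natCast, sum_range_succ, range_zero, sum_empty, zero_add, Nat.cast_zero,
    Nat.cast_one, Nat.cast_ofNat, Nat.choose_zero_right, Nat.choose_one_right, hL.P_zero,
    hL.P_one, P_two, hL.P_three, map_zero, map_smul, LinearMap.zero_apply, LinearMap.smul_apply,
    smul_zero, add_zero, sub_zero, one_smul, W.transl_inv] at commutator
  rw [sub_eq_iff_eq_add.1 commutator]
  push_cast
  module

theorem IsConformalVector.P_one_D_pow (hL : W.IsConformalVector L c) (m : ℕ) :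
    W.P 1 L ((W.D ^ m) L) = (m + 2 : ℂ) • (W.D ^ m) L := by
  induction m with
  | zero => simpa using hL.P_one
  | succ m ih =>
    rw [pow_succ', Module.End.mul_apply, P_apply_D, ih, sub_self, hL.P_zero, map_smul]
    push_cast
    module

theorem IsConformalVector.coeff_map_P_one (hL : W.IsConformalVector L c)
    (hco : W.IsCoordinate L co) (v : V) (d : ℕ) :
    (co (W.P 1 L v)).coeff d = (d + 2) * (co v).coeff d := by
  have coeff_map_P_one_aeval (p : ℂ[X]) :
      (co (W.P 1 L (aeval W.D p L))).coeff d = (d + 2) * p.coeff d := by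
    induction p using Polynomial.induction_on' with
    | add p q hp hq => simp only [map_add, LinearMap.add_apply, coeff_add, hp, hq, mul_add]
    | monomial n s =>
      rw [aeval_monomial, Module.End.mul_apply, Module.algebraMap_end_apply, map_smul,
        hL.P_one_D_pow, map_smul, map_smul, hco.map_D_pow, hco.map_gen, mul_one, coeff_smul,
        coeff_smul, coeff_X_pow, coeff_monomial]
      obtain rfl | hne := eq_or_ne d n
      · simp [mul_comm]
      · simp [hne, hne.symm]
  obtain ⟨α, hα⟩ := hco.exists_eq_aeval_D_add_smul_vac v
  conv_lhs => rw [hα, map_add, map_smul, W.creation_pos L 1 zero_le_one, smul_zero, add_zero]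
  exact coeff_map_P_one_aeval (co v)

theorem IsConformalVector.exists_eq_smul_D_pow (hL : W.IsConformalVector L c)
    (hco : W.IsCoordinate L co) {w : ℕ} {v : V} (hv : W.P 1 L v = (w + 2 : ℂ) • v) :
    ∃ γ : ℂ, v = γ • (W.D ^ w) L := by
  have map_v : co v = co ((co v).coeff w • (W.D ^ w) L) := by
    ext d
    rw [map_smul, hco.map_D_pow, hco.map_gen, mul_one, coeff_smul, coeff_X_pow]
    obtain rfl | hne := eq_or_ne d w
    · simp
    · have h := hL.coeff_map_P_one hco v d
      rw [hv, map_smul, coeff_smul, smul_eq_mul] at h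
      have hwd : (w - d : ℂ) ≠ 0 := sub_ne_zero.2 (mod_cast hne.symm)
      simpa [hne, hwd] using show (w - d : ℂ) * (co v).coeff d = 0 by linear_combination h
  obtain ⟨α, hα⟩ := hco.exists_eq_add_smul_vac map_v
  have h : (w + 2 : ℂ) • α • W.vac = 0 := by
    rw [hα, map_add, map_smul, map_smul, hL.P_one_D_pow, W.creation_pos L 1 zero_le_one, smul_zero,
      add_zero, smul_comm, smul_add] at hv
    exact left_eq_add.1 hv
  refine ⟨(co v).coeff w, ?_⟩
  rwa [(smul_eq_zero.1 h).resolve_left (by exact_mod_cast (w + 1).succ_ne_zero), add_zero] at hα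

theorem IsConformalVector.exists_P_eq_smul_D_pow (hL : W.IsConformalVector L c)
    (hco : W.IsCoordinate L co) (w : ℕ) : ∃ γ : ℂ, W.P (1 - w) L L = γ • (W.D ^ w) L := by
  refine hL.exists_eq_smul_D_pow hco ?_
  rw [P_one_P hL.P_zero hL.P_one, hL.P_one, map_smul]
  push_cast
  module

theorem IsConformalVector.P_two_D_D (hL : W.IsConformalVector L c) :
    W.P 2 L (W.D (W.D L)) = (10 : ℂ) • W.D L := by
  have P_two : W.P 2 L L = 0 := hL.P_eq_zero 2 le_rfl (by lia)
  simp only [P_apply_D, P_two, map_zero, Int.cast_ofNat, Int.reduceSub, hL.P_one, zero_add,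
    map_smul, Int.cast_one, sub_self, hL.P_zero, one_smul, smul_add]
  module

theorem IsConformalVector.P_three_D_D (hL : W.IsConformalVector L c) :
    W.P 3 L (W.D (W.D L)) = (12 : ℂ) • L := by
  have P_two : W.P 2 L L = 0 := hL.P_eq_zero 2 le_rfl (by lia)
  simp only [P_apply_D, hL.P_three, map_smul, W.D_vac, smul_zero, Int.cast_ofNat, Int.reduceSub,
    P_two, add_zero, map_zero, hL.P_one, zero_add]
  module

theorem IsConformalVector.P_three_D_D_D_D (hL : W.IsConformalVector L c) :
    W.P 3 L (W.D (W.D (W.D (W.D L)))) = (96 : ℂ) • W.D (W.D L) := by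
  have P_two : W.P 2 L L = 0 := hL.P_eq_zero 2 le_rfl (by lia)
  simp only [P_apply_D, hL.P_three, map_smul, W.D_vac, smul_zero, Int.cast_ofNat, Int.reduceSub,
    P_two, add_zero, map_zero, hL.P_one, zero_add, Int.cast_one, sub_self, hL.P_zero, one_smul,
    smul_add, map_add]
  module

theorem IsConformalVector.P_five_D_D_D_D (hL : W.IsConformalVector L c) :
    W.P 5 L (W.D (W.D (W.D (W.D L)))) = (240 : ℂ) • L := by
  have P_two : W.P 2 L L = 0 := hL.P_eq_zero 2 le_rfl (by lia)
  have P_four : W.P 4 L L = 0 := hL.P_eq_zero 4 (by lia) (by lia)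
  have P_five : W.P 5 L L = 0 := hL.P_eq_zero 5 (by lia) (by lia)
  simp only [P_apply_D, P_five, map_zero, Int.cast_ofNat, Int.reduceSub, P_four, smul_zero,
    add_zero, hL.P_three, zero_add, map_smul, W.D_vac, P_two, hL.P_one]
  module

theorem IsCoordinate.smul_D_pow_injective (hco : W.IsCoordinate L co) (m : ℕ) :
    Function.Injective fun s : ℂ ↦ s • (W.D ^ m) L := fun s t hst ↦ by
  have h := congrArg (fun v ↦ (co v).coeff m) hst
  simpa [hco.map_D_pow, hco.map_gen] using h

theorem IsConformalVector.coeff_P_neg_one (hL : W.IsConformalVector L c)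
    (hco : W.IsCoordinate L co) {β : ℂ} (hβ : W.P (-1) L L = β • W.D (W.D L)) :
    10 * β = 3 ∧ 12 * β = 8 + 2 * c := by
  have P_two : W.P 2 L L = 0 := hL.P_eq_zero 2 le_rfl (by lia)
  have relation_two : β • (10 : ℂ) • W.D L = (2 + 1 : ℂ) • W.D L := by
    simpa [hβ, hL.P_two_D_D, P_two, hL.P_zero] using hL.P_P 2 (-1) L
  have relation_three : β • (12 : ℂ) • L = c • L + (3 + 1 : ℂ) • (2 : ℂ) • L + c • L := by
    simpa [hβ, hL.P_three_D_D, hL.P_three, hL.P_one, W.creation, W.vac_field] using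
      hL.P_P 3 (-1) L
  constructor
  · refine hco.smul_D_pow_injective 1 ?_
    simp only [pow_one]
    linear_combination (norm := module) relation_two
  · refine hco.smul_D_pow_injective 0 ?_
    simp only [pow_zero, Module.End.one_apply]
    linear_combination (norm := module) relation_three

theorem IsConformalVector.coeff_P_neg_three (hL : W.IsConformalVector L c)
    (hco : W.IsCoordinate L co) {β γ : ℂ} (hβ : W.P (-1) L L = β • W.D (W.D L))
    (hγ : W.P (-3) L L = γ • W.D (W.D (W.D (W.D L)))) :
    240 * γ = 16 + 10 * c ∧ 96 * γ = c / 2 + 6 * β := by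
  have P_five : W.P 5 L L = 0 := hL.P_eq_zero 5 (by lia) (by lia)
  have relation_five : γ • (240 : ℂ) • L = (5 + 3 : ℂ) • (2 : ℂ) • L + (10 * c) • L := by
    simpa [hγ, hL.P_five_D_D_D_D, P_five, hL.P_one, W.vac_field, Nat.choose] using
      hL.P_P 5 (-3) L
  have relation_three : γ • (96 : ℂ) • W.D (W.D L) =
      c • (1 / 2 : ℂ) • W.D (W.D L) + (3 + 3 : ℂ) • β • W.D (W.D L) := by
    simpa [hγ, hL.P_three_D_D_D_D, hL.P_three, P_neg_three_vac, hβ, W.vac_field] using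
      hL.P_P 3 (-3) L
  constructor
  · refine hco.smul_D_pow_injective 0 ?_
    simp only [pow_zero, Module.End.one_apply]
    linear_combination (norm := module) relation_five
  · refine hco.smul_D_pow_injective 2 ?_
    simp only [pow_two, Module.End.mul_apply]
    linear_combination (norm := module) relation_three

theorem IsConformalVector.not_isCoordinate (hL : W.IsConformalVector L c) :
    ¬ W.IsCoordinate L co := fun hco ↦ by
  obtain ⟨β, hβ⟩ := hL.exists_P_eq_smul_D_pow hco 2
  obtain ⟨γ, hγ⟩ := hL.exists_P_eq_smul_D_pow hco 4
  obtain ⟨h₁, h₂⟩ := hL.coeff_P_neg_one hco (β := β) (by simpa [pow_succ] using hβ)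
  obtain ⟨h₃, h₄⟩ := hL.coeff_P_neg_three hco (β := β) (γ := γ) (by simpa [pow_succ] using hβ)
    (by simpa [pow_succ] using hγ)
  have : (31 : ℂ) = 0 := by linear_combination 15 * h₁ - 35 / 2 * h₂ + 4 * h₃ - 10 * h₄
  norm_num at this

theorem P_natCast_eq_zero (hfin : W.IsFinite) (hdom : W.IsDomain) (j : ℕ) : W.P j = 0 := by
  by_contra hj
  obtain ⟨hder, hPD, g, co, hco⟩ := exists_isCoordinate_of_exists_P_ne_zero hfin hdom ⟨j, hj⟩
  obtain ⟨L, c, co', hco', hL⟩ := hco.exists_isConformalVector hder hPD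
  exact hL.not_isCoordinate hco'

end ConformalVector

/-! ### Quotients -/

section Quotient

variable {V : Type*} [AddCommGroup V] [Module ℂ V] {W : VertexAlgebra V} {I : Submodule ℂ V}

theorem isIdeal_bot : W.IsIdeal ⊥ := by
  simp [IsIdeal]

theorem IsIdeal.P_mem_left (hI : W.IsIdeal I) {a : V} (ha : a ∈ I) (b : V) (n : ℤ) :
    W.P n a b ∈ I := by
  obtain ⟨N, hN⟩ := W.exists_forall_P_add_eq_zero n b a
  rw [skew_eq_sum_range hN]
  refine I.sum_mem fun j _ ↦ I.smul_mem _ ?_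
  exact Module.End.pow_apply_mem_of_forall_mem j hI.1 _ (hI.2 b a ha _)

/-- The `n`-th product on `V ⧸ I` induced by that of `W`. -/
def quotientP (hI : W.IsIdeal I) (n : ℤ) : (V ⧸ I) →ₗ[ℂ] (V ⧸ I) →ₗ[ℂ] (V ⧸ I) :=
  ((W.P n).compr₂ I.mkQ).liftQ₂ I I
    (fun _ ha ↦ LinearMap.ext fun b ↦ (Submodule.Quotient.mk_eq_zero I).2 (hI.P_mem_left ha b n))
    (fun b hb ↦ LinearMap.ext fun a ↦ (Submodule.Quotient.mk_eq_zero I).2 (hI.2 a b hb n))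

theorem quotientP_mk (hI : W.IsIdeal I) (n : ℤ) (a b : V) :
    quotientP hI n (Submodule.Quotient.mk a) (Submodule.Quotient.mk b) =
      Submodule.Quotient.mk (W.P n a b) :=
  rfl

/-- The translation operator on `V ⧸ I` induced by that of `W`. -/
def quotientD (hI : W.IsIdeal I) : Module.End ℂ (V ⧸ I) := I.mapQ I W.D hI.1

theorem quotientD_pow_mk (hI : W.IsIdeal I) (k : ℕ) (a : V) :
    (quotientD hI ^ k) (Submodule.Quotient.mk a) = Submodule.Quotient.mk ((W.D ^ k) a) := by
  rw [quotientD, ← I.mapQ_pow hI.1, Submodule.mapQ_apply]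

/-- The quotient of a vertex algebra by an ideal. -/
def quotient (hI : W.IsIdeal I) : VertexAlgebra (V ⧸ I) where
  P := quotientP hI
  vac := Submodule.Quotient.mk W.vac
  D := quotientD hI
  field_ax := by
    rintro ⟨a⟩ ⟨b⟩
    obtain ⟨N, hN⟩ := W.field_ax a b
    exact ⟨N, fun n hn ↦ congrArg I.mkQ (hN n hn)⟩
  vac_field := by
    rintro n ⟨a⟩
    exact (congrArg I.mkQ (W.vac_field n a)).trans (apply_ite I.mkQ _ _ _)
  creation := by
    rintro ⟨a⟩
    exact congrArg I.mkQ (W.creation a)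
  creation_pos := by
    rintro ⟨a⟩ n hn
    exact congrArg I.mkQ (W.creation_pos a n hn)
  D_vac := congrArg I.mkQ W.D_vac
  transl_inv := by
    rintro n ⟨a⟩ ⟨b⟩
    exact congrArg I.mkQ (W.transl_inv n a b)
  D_deriv := by
    rintro n ⟨a⟩ ⟨b⟩
    exact congrArg I.mkQ (W.D_deriv n a b)
  skew := by
    rintro n ⟨a⟩ ⟨b⟩
    obtain ⟨N, hN⟩ := W.exists_forall_P_add_eq_zero n b a
    simp only [Submodule.Quotient.quot_mk_eq_mk, quotientP_mk, quotientD_pow_mk]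
    rw [finsum_eq_sum_range (N := N) fun j hj ↦ by simp [hN j hj], skew_eq_sum_range hN]
    exact map_sum I.mkQ _ _
  borcherds := by
    rintro m k ⟨a⟩ ⟨b⟩ ⟨c⟩
    obtain ⟨N, hN⟩ := W.field_ax a b
    simp only [Submodule.Quotient.quot_mk_eq_mk, quotientP_mk, Int.cast_smul_eq_zsmul]
    rw [finsum_eq_sum_range (N := N) fun j hj ↦ by simp [hN j hj], ← Submodule.Quotient.mk_sub,
      W.commutator_eq_sum_range m k c hN]
    exact map_sum I.mkQ _ _

theorem IsFinite.quotient (hfin : W.IsFinite) (hI : W.IsIdeal I) :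
    (quotient hI).IsFinite := by
  classical
  obtain ⟨s, hs⟩ := hfin
  refine ⟨s.image I.mkQ, ?_⟩
  rintro ⟨v⟩
  have mk_mem := Submodule.mem_map_of_mem (f := I.mkQ) (hs v)
  rw [Submodule.map_span] at mk_mem
  refine Submodule.span_mono ?_ mk_mem
  rintro _ ⟨_, ⟨g, hg, k, rfl⟩, rfl⟩
  exact ⟨I.mkQ g, mem_image_of_mem _ hg, k, (quotientD_pow_mk hI k g).symm⟩

theorem isIdeal_comap_mkQ {hI : W.IsIdeal I} {J : Submodule ℂ (V ⧸ I)}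
    (hJ : (quotient hI).IsIdeal J) : W.IsIdeal (J.comap I.mkQ) :=
  ⟨fun _ hx ↦ hJ.1 _ hx, fun a _ hb n ↦ hJ.2 (I.mkQ a) _ hb n⟩

end Quotient

/-! ### The derived series -/

section DerivedSeries

variable {V : Type*} [AddCommGroup V] [Module ℂ V] {W : VertexAlgebra V} {I : Submodule ℂ V}

theorem posSpan_le {A B C : Submodule ℂ V} :
    W.posSpan A B ≤ C ↔ ∀ a ∈ A, ∀ b ∈ B, ∀ j : ℕ, W.P j a b ∈ C := by
  simp only [posSpan, Submodule.span_le, Set.subset_def]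
  exact ⟨fun h a ha b hb j ↦ h _ ⟨a, ha, b, hb, j, rfl⟩,
    fun h _ ⟨a, ha, b, hb, j, hx⟩ ↦ hx ▸ h a ha b hb j⟩

theorem P_mem_posSpan {A B : Submodule ℂ V} {a b : V} (ha : a ∈ A) (hb : b ∈ B) (j : ℕ) :
    W.P j a b ∈ W.posSpan A B :=
  posSpan_le.1 le_rfl a ha b hb j

variable (W) in
theorem derSeries_antitone : Antitone W.derSeries := by
  refine antitone_nat_of_succ_le fun n ↦ ?_
  induction n with
  | zero => exact le_top
  | succ n ih => exact posSpan_le.2 fun a ha b hb j ↦ P_mem_posSpan (ih ha) (ih hb) j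

theorem derSeries_one_le_of_quotient (hI : W.IsIdeal I)
    (h : ∀ j : ℕ, (quotient hI).P j = 0) : W.derSeries 1 ≤ I :=
  posSpan_le.2 fun a _ b _ j ↦ (Submodule.Quotient.mk_eq_zero I).1 <|
    LinearMap.congr_fun₂ (h j) (I.mkQ a) (I.mkQ b)

variable (W) in
/-- An ideal modulo which the derived series does not terminate. -/
def IsNonsolvableIdeal (I : Submodule ℂ V) : Prop := W.IsIdeal I ∧ ∀ N, ¬ W.derSeries N ≤ I

theorem exists_derSeries_le_comap (hmax : Maximal W.IsNonsolvableIdeal I)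
    {J : Submodule ℂ (V ⧸ I)} (hJ : (quotient hmax.prop.1).IsIdeal J) (hne : J ≠ ⊥) :
    ∃ N, W.derSeries N ≤ J.comap I.mkQ := by
  by_contra! not_le
  have comap_eq : I = J.comap I.mkQ :=
    hmax.eq_of_le ⟨isIdeal_comap_mkQ hJ, not_le⟩ (I.le_comap_mkQ J)
  refine hne (Submodule.comap_injective_of_surjective I.mkQ_surjective ?_)
  rw [← comap_eq, Submodule.comap_bot, I.ker_mkQ]

theorem isPrime_quotient_of_maximal (hmax : Maximal W.IsNonsolvableIdeal I) :
    (quotient hmax.prop.1).IsPrime := by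
  intro J K hJ hK hJK
  by_contra! ne_bot
  obtain ⟨M, hM⟩ := exists_derSeries_le_comap hmax hJ ne_bot.1
  obtain ⟨N, hN⟩ := exists_derSeries_le_comap hmax hK ne_bot.2
  refine hmax.prop.2 (max M N + 1) (posSpan_le.2 fun a ha b hb j ↦ ?_)
  exact (Submodule.Quotient.mk_eq_zero I).1 <|
    hJK _ (hM (W.derSeries_antitone (le_max_left M N) ha))
      _ (hN (W.derSeries_antitone (le_max_right M N) hb)) j

end DerivedSeries

end VertexAlgebra

open VertexAlgebra in
/-- every finite vertex algebra is solvable. -/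
theorem finite_vertex_algebra_is_solvable {V : Type*} [AddCommGroup V] [Module ℂ V]
    (W : VertexAlgebra V) (hfin : W.IsFinite) :
    ∃ N : ℕ, W.derSeries N = ⊥ := by
  by_contra! ne_bot
  obtain ⟨I, hmax⟩ : ∃ I, Maximal W.IsNonsolvableIdeal I :=
    hfin.exists_maximal (fun I hI ↦ hI.1.1)
      ⟨⊥, isIdeal_bot, fun N hN ↦ ne_bot N (le_bot_iff.1 hN)⟩
  have hI : W.IsIdeal I := hmax.prop.1
  have hdom : (quotient hI).IsDomain := (isPrime_quotient_of_maximal hmax).isDomain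
  exact hmax.prop.2 1 (derSeries_one_le_of_quotient hI (P_natCast_eq_zero (hfin.quotient hI) hdom))
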